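/- arXiv:1404.5573 — 16 statements merged into one kernel-verified Lean document; each statement's English description precedes it below -/
import Mathlib

section
/- Let r ≥ 1 and k ≥ 0 be integers, and let α_1,…,α_r and β_1,…,β_r be nonnegative integers with α_i ≤ β_i for each i. Set α = α_1+⋯+α_r and β = β_1+⋯+β_r. Then ∑ C(k_1+α_1, β_1)·C(k_2+α_2, β_2)⋯C(k_r+α_r, β_r) = C(k+α+r−1, β+r−1), where the sum ranges over all r-tuples (k_1,…,k_r) of nonnegative integers with k_1+⋯+k_r = k. -/
/-!
The identity compares coefficients in a product of power series. For `a ≤ b` one has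
`∑ₙ C(n + a, b) Xⁿ = X ^ (b - a) / (1 - X) ^ (b + 1)` (`coeff_X_pow_mul_invOneSubPow`). Multiplying
these series for the pairs `(αᵢ, βᵢ)` gives `X ^ (β - α) / (1 - X) ^ (β + r)`, where `α` and `β` are
the total sums. This is the series of the same shape for the pair `(α + r - 1, β + r - 1)`. The
coefficient of `Xᵏ` in the product is the sum over compositions of `k` into `r` parts.
-/

open PowerSeries in
/-- The coefficient of `Xⁿ` in `X ^ (b - a) / (1 - X) ^ (b + 1)` is `C(n + a, b)`. -/
lemma coeff_X_pow_mul_invOneSubPow {a b : ℕ} (h : a ≤ b) (n : ℕ) :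
    coeff n ((X : ℤ⟦X⟧) ^ (b - a) * (invOneSubPow ℤ (b + 1)).val)
      = (Nat.choose (n + a) b : ℤ) := by
  rw [coeff_X_pow_mul', invOneSubPow_val_succ_eq_mk_add_choose, coeff_mk]
  split_ifs with hn
  · rw [show b + (n - (b - a)) = n + a by omega]
  · rw [Nat.choose_eq_zero_of_lt (by omega), Nat.cast_zero]

open PowerSeries in
/-- The Cauchy product formula, with the sum indexed by compositions of `k` into `r` parts. -/
lemma coeff_prod_fin (r k : ℕ) (f : Fin r → ℤ⟦X⟧) :
    coeff k (∏ i, f i) = ∑ t ∈ Finset.Nat.antidiagonalTuple r k, ∏ i, coeff (t i) (f i) := by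
  rw [coeff_prod]
  refine Finset.sum_equiv Finsupp.equivFunOnFinite (fun t => ?_) (fun t _ => rfl)
  simp [Finset.mem_finsuppAntidiag, Finset.Nat.mem_antidiagonalTuple]

open PowerSeries in
lemma prod_invOneSubPow (r : ℕ) (d : Fin r → ℕ) :
    ∏ i, (invOneSubPow ℤ (d i)).val = (invOneSubPow ℤ (∑ i, d i)).val := by
  simp only [invOneSubPow_eq_inv_one_sub_pow, Units.val_pow_eq_pow_val,
    Finset.prod_pow_eq_pow_sum]

theorem sum_prod_choose_comp (r k : ℕ) (hr : 1 ≤ r) (α β : Fin r → ℕ)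
    (hαβ : ∀ i, α i ≤ β i) :
    ∑ t ∈ Finset.Nat.antidiagonalTuple r k, ∏ i, Nat.choose (t i + α i) (β i)
      = Nat.choose (k + (∑ i, α i) + r - 1) ((∑ i, β i) + r - 1) := by
  have hle : ∑ i, α i ≤ ∑ i, β i := Finset.sum_le_sum fun i _ => hαβ i
  have hsub : ∑ i, (β i - α i) = ((∑ i, β i) + (r - 1)) - ((∑ i, α i) + (r - 1)) := by
    rw [Finset.sum_tsub_distrib _ fun i _ => hαβ i]
    omega
  have hsucc : ∑ i, (β i + 1) = (∑ i, β i) + (r - 1) + 1 := by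
    simp only [Finset.sum_add_distrib, Finset.sum_const, Finset.card_univ, Fintype.card_fin,
      smul_eq_mul, mul_one]
    omega
  have key := coeff_prod_fin r k fun i =>
    (PowerSeries.X : PowerSeries ℤ) ^ (β i - α i) * (PowerSeries.invOneSubPow ℤ (β i + 1)).val
  simp only [coeff_X_pow_mul_invOneSubPow (hαβ _)] at key
  rw [Finset.prod_mul_distrib, Finset.prod_pow_eq_pow_sum, prod_invOneSubPow, hsub, hsucc,
    coeff_X_pow_mul_invOneSubPow (by omega)] at key
  rw [show k + (∑ i, α i) + r - 1 = k + ((∑ i, α i) + (r - 1)) by omega,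
    show (∑ i, β i) + r - 1 = (∑ i, β i) + (r - 1) by omega]
  exact_mod_cast key.symm
end

section
/- For integers r ≥ 1 and n ≥ 0, ∑ k_1·k_2⋯k_r = C(n+r−1, 2r−1), where the sum ranges over all compositions (k_1,…,k_r) of n into r parts. -/
/-!
The proof is by induction on `r`, splitting off the first part of the composition: the sum over
compositions into `r + 1` parts is the convolution of `a ↦ a` with the sum over compositions into
`r` parts (`sum_prod_antidiagonalTuple_succ`). Convolving with `a ↦ a` amounts to taking partial
sums twice, so by the hockey-stick identity it raises the lower index of a binomial coefficient by
two (`sum_antidiagonal_mul_choose`).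
-/

theorem sum_prod_antidiagonalTuple_succ (r n : ℕ) :
    ∑ t ∈ Finset.Nat.antidiagonalTuple (r + 1) n, ∏ i, t i
      = ∑ p ∈ Finset.HasAntidiagonal.antidiagonal n,
          p.1 * ∑ t ∈ Finset.Nat.antidiagonalTuple r p.2, ∏ i, t i := by
  simp only [Finset.mul_sum]
  rw [Finset.sum_sigma']
  symm
  refine Finset.sum_bij'
    (fun x _ => (Fin.cons x.1.1 x.2 : Fin (r + 1) → ℕ))
    (fun t _ => ⟨(t 0, ∑ i, Fin.tail t i), Fin.tail t⟩) ?_ ?_ ?_ ?_ ?_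
  · rintro ⟨⟨a, b⟩, t⟩ h
    simp only [Finset.mem_sigma, Finset.HasAntidiagonal.mem_antidiagonal, Finset.Nat.mem_antidiagonalTuple] at h ⊢
    rw [Fin.sum_cons, h.2, h.1]
  · intro t h
    simp only [Finset.mem_sigma, Finset.HasAntidiagonal.mem_antidiagonal, Finset.Nat.mem_antidiagonalTuple] at h ⊢
    rw [Fin.sum_univ_succ] at h
    exact ⟨h, trivial⟩
  · rintro ⟨⟨a, b⟩, t⟩ h
    simp only [Finset.mem_sigma, Finset.HasAntidiagonal.mem_antidiagonal, Finset.Nat.mem_antidiagonalTuple] at h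
    simp [h.2]
  · intro t h
    simp
  · rintro ⟨⟨a, b⟩, t⟩ h
    simp [Fin.prod_cons]

/-- A hockey-stick identity; `m ≤ k` makes the boundary term `C(m, k + 1)` vanish. -/
theorem sum_antidiagonal_choose_of_le (m k n : ℕ) (h : m ≤ k) :
    ∑ p ∈ Finset.HasAntidiagonal.antidiagonal n, Nat.choose (p.2 + m) k = Nat.choose (n + m + 1) (k + 1) := by
  induction n with
  | zero => simp [Nat.choose_succ_succ, Nat.choose_eq_zero_of_lt (Nat.lt_succ_of_le h)]
  | succ n ih =>
    rw [Finset.Nat.antidiagonal_succ, Finset.sum_cons, Finset.sum_map]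
    simp only [Function.Embedding.coe_prodMap, Prod.map_snd, Function.Embedding.refl_apply]
    rw [ih, Nat.choose_succ_succ (n + 1 + m) k, show n + 1 + m = n + m + 1 by ring]

theorem sum_antidiagonal_mul_choose (m k n : ℕ) (h : m ≤ k) :
    ∑ p ∈ Finset.HasAntidiagonal.antidiagonal n, p.1 * Nat.choose (p.2 + m) k
      = Nat.choose (n + m + 1) (k + 2) := by
  induction n with
  | zero =>
    rw [Nat.choose_eq_zero_of_lt (by omega)]
    simp
  | succ n ih =>
    rw [Finset.Nat.antidiagonal_succ, Finset.sum_cons, Finset.sum_map]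
    simp only [Function.Embedding.coe_prodMap, Prod.map_snd, Prod.map_fst,
      Function.Embedding.refl_apply, Function.Embedding.coeFn_mk, Nat.succ_eq_add_one, add_mul,
      one_mul, zero_mul, zero_add, Finset.sum_add_distrib]
    rw [ih, sum_antidiagonal_choose_of_le m k n h,
      show n + 1 + m + 1 = (n + m + 1) + 1 by ring, Nat.choose_succ_succ (n + m + 1) (k + 1),
      add_comm]

theorem sum_prod_comp_eq_choose (r n : ℕ) (hr : 1 ≤ r) :
    ∑ t ∈ Finset.Nat.antidiagonalTuple r n, ∏ i, t i
      = Nat.choose (n + r - 1) (2 * r - 1) := by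
  induction r, hr using Nat.le_induction generalizing n with
  | base => simp
  | succ r hr ih =>
    rw [sum_prod_antidiagonalTuple_succ]
    obtain ⟨s, rfl⟩ : ∃ s, r = s + 1 := ⟨r - 1, by omega⟩
    simp only [ih]
    exact sum_antidiagonal_mul_choose s (2 * s + 1) n (by omega)
end

section
/- For integers 1 ≤ p ≤ r and n ≥ 0, ∑ k_1·k_2⋯k_p = C(n+r−1, r+p−1), where the sum ranges over all compositions (k_1,…,k_r) of n into r parts and only the first p entries are multiplied. -/
/-!
The proof uses generating functions over `ℤ`. The sum over all `t` with `t₁ + ⋯ + t_r = n` of a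
product of functions of the single entries is the `n`-th coefficient of a product of `r` power
series (`sum_antidiagonalTuple_prod`). An entry that is multiplied contributes
`∑ k Xᵏ = X / (1 - X)²` and every other entry contributes `∑ Xᵏ = 1 / (1 - X)`, so with `r = p + q`
the product is `Xᵖ / (1 - X)^(2p + q)`, whose `n`-th coefficient is `C(n + r - 1, r + p - 1)`.
-/

/-- A sum over compositions of a product of functions of the single entries is a coefficient of the
product of the generating functions. -/
theorem sum_antidiagonalTuple_prod {r : ℕ} (n : ℕ) (f : Fin r → ℕ → ℤ) :
    ∑ t ∈ Finset.Nat.antidiagonalTuple r n, ∏ i, f i (t i)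
      = PowerSeries.coeff n (∏ i, PowerSeries.mk (f i)) := by
  rw [PowerSeries.coeff_prod]
  refine Finset.sum_nbij' (fun t => Finsupp.equivFunOnFinite.symm t) (fun l => ⇑l) ?_ ?_ ?_ ?_ ?_
  · intro t ht
    simpa [Finset.Nat.mem_antidiagonalTuple, Finset.mem_finsuppAntidiag] using ht
  · intro l hl
    simpa [Finset.Nat.mem_antidiagonalTuple, Finset.mem_finsuppAntidiag] using hl
  · intro t _
    rfl
  · intro l _
    ext i
    rfl
  · intro t _
    simp

theorem mk_natCast_eq_X_mul :
    PowerSeries.mk (fun k => (k : ℤ)) = PowerSeries.X * (PowerSeries.invOneSubPow ℤ 2).val := by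
  ext n
  rw [PowerSeries.invOneSubPow_val_succ_eq_mk_add_choose]
  cases n with
  | zero => simp
  | succ n =>
    rw [PowerSeries.coeff_succ_X_mul]
    simp [add_comm]

theorem mk_one_eq_invOneSubPow :
    PowerSeries.mk (fun _ => (1 : ℤ)) = (PowerSeries.invOneSubPow ℤ 1).val := by
  rw [PowerSeries.invOneSubPow_val_succ_eq_mk_add_choose]
  ext n
  simp

theorem invOneSubPow_pow (d m : ℕ) :
    (PowerSeries.invOneSubPow ℤ d) ^ m = PowerSeries.invOneSubPow ℤ (d * m) := by
  induction m with
  | zero => simp [PowerSeries.invOneSubPow_zero]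
  | succ m ih => rw [pow_succ, ih, mul_add, mul_one, PowerSeries.invOneSubPow_add]

theorem sum_prod_first_p_comp_eq_choose (r p n : ℕ) (hp : 1 ≤ p) (hpr : p ≤ r) :
    ∑ t ∈ Finset.Nat.antidiagonalTuple r n, ∏ i : Fin p, t (Fin.castLE hpr i)
      = Nat.choose (n + r - 1) (r + p - 1) := by
  obtain ⟨q, rfl⟩ := Nat.exists_eq_add_of_le hpr
  have key := sum_antidiagonalTuple_prod n
    (Fin.append (fun (_ : Fin p) (k : ℕ) => (k : ℤ)) (fun (_ : Fin q) (_ : ℕ) => (1 : ℤ)))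
  simp only [Fin.prod_univ_add, Fin.append_left, Fin.append_right, Finset.prod_const_one, mul_one,
    Finset.prod_const, Finset.card_univ, Fintype.card_fin, mk_natCast_eq_X_mul,
    mk_one_eq_invOneSubPow, mul_pow, ← Units.val_pow_eq_pow_val, invOneSubPow_pow, mul_assoc,
    ← Units.val_mul, ← PowerSeries.invOneSubPow_add] at key
  -- As `1 ≤ p`, the exponent of `1 / (1 - X)` is positive, so the binomial formula for it applies.
  obtain ⟨d, hd⟩ : ∃ d, 2 * p + 1 * q = d + 1 := ⟨2 * p + q - 1, by omega⟩
  rw [hd, PowerSeries.coeff_X_pow_mul', PowerSeries.invOneSubPow_val_succ_eq_mk_add_choose,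
    PowerSeries.coeff_mk] at key
  have hd' : p + q + p - 1 = d := by omega
  rw [hd']
  zify
  refine key.trans ?_
  split_ifs with h
  · rw [show d + (n - p) = n + (p + q) - 1 by omega]
  -- For `n < p` the factor `Xᵖ` kills the coefficient, and `n + r - 1 < r + p - 1`.
  · rw [Nat.choose_eq_zero_of_lt (by omega), Nat.cast_zero]
end

section
/- For integers k ≥ 1, n ≥ 0 and α ≥ 0, ∑ (i_1+α)(i_2+α)⋯(i_k+α) = ∑_{j=0}^{k} C(k,j)·C(n+k−1, k+j−1)·α^{k−j}, where the left-hand sum ranges over all compositions (i_1,…,i_k) of n into k parts. (The right-hand side equals the paper's form ∑_{j} C(k,j)·C(n+k−1, n−j)·α^{k−j} by the symmetry C(n+k−1, n−j) = C(n+k−1, k+j−1), with terms for j > n vanishing.) -/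
/-!
The identity is a comparison of coefficients of `X ^ n` in the `k`-th power of the generating
function `F = ∑ i, (i + α) X ^ i` over `ℤ`. Expanding the power as a product gives the sum over
compositions (`coeff_pow_eq_sum_antidiagonalTuple`). On the other hand, with `G = ∑ i, X ^ i`,
one has `F = X * G ^ 2 + α * G` (`mk_add_const_eq`), so that the binomial theorem gives
`F ^ k = ∑ j, C(k, j) α ^ (k - j) X ^ j G ^ (k + j)`, and the coefficients of powers of `G` are
binomial coefficients (`coeff_X_pow_mul_geom_pow`).
-/

open PowerSeries in
theorem coeff_pow_eq_sum_antidiagonalTuple {R : Type*} [CommSemiring R] (F : PowerSeries R)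
    (k n : ℕ) :
    coeff n (F ^ k) = ∑ t ∈ Finset.Nat.antidiagonalTuple k n, ∏ i, coeff (t i) F := by
  have h := coeff_prod (fun _ : Fin k => F) n Finset.univ
  rw [Finset.prod_const, Finset.card_univ, Fintype.card_fin] at h
  rw [h]
  refine Finset.sum_bij' (fun l _ => ⇑l) (fun t _ => Finsupp.equivFunOnFinite.symm t)
    ?_ ?_ ?_ ?_ ?_ <;> simp [Finset.Nat.mem_antidiagonalTuple]

open PowerSeries in
theorem mk_add_const_eq (α : ℕ) :
    (mk fun i => (i : ℤ) + α) = X * (mk 1 : PowerSeries ℤ) ^ 2 + C (α : ℤ) * mk 1 := by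
  ext n
  rw [mk_one_pow_eq_mk_choose_add ℤ 1, map_add, coeff_C_mul]
  cases n with
  | zero => simp
  | succ n => simp [coeff_succ_X_mul, add_comm]

/-- For `j > n` the left-hand coefficient vanishes, and so does the binomial coefficient, its lower
index exceeding its upper one; the truncated subtractions are harmless since `1 ≤ k`. -/
theorem coeff_X_pow_mul_geom_pow (k n j : ℕ) (hk : 1 ≤ k) :
    PowerSeries.coeff (R := ℤ) n
        ((PowerSeries.X : PowerSeries ℤ) ^ j * (PowerSeries.mk 1 : PowerSeries ℤ) ^ (k + j))
      = Nat.choose (n + k - 1) (k + j - 1) := by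
  obtain ⟨d, rfl⟩ := Nat.exists_eq_add_of_le' hk
  rw [show d + 1 + j = d + j + 1 by omega, PowerSeries.mk_one_pow_eq_mk_choose_add,
    PowerSeries.coeff_X_pow_mul']
  split_ifs with h
  · rw [PowerSeries.coeff_mk]
    congr 2
    omega
  · rw [Nat.choose_eq_zero_of_lt (by omega), Nat.cast_zero]

theorem sum_prod_add_const_comp (k n α : ℕ) (hk : 1 ≤ k) :
    ∑ t ∈ Finset.Nat.antidiagonalTuple k n, ∏ i, (t i + α)
      = ∑ j ∈ Finset.range (k + 1),
          Nat.choose k j * Nat.choose (n + k - 1) (k + j - 1) * α ^ (k - j) := by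
  have h := coeff_pow_eq_sum_antidiagonalTuple (PowerSeries.mk fun i => (i : ℤ) + α) k n
  simp only [PowerSeries.coeff_mk] at h
  zify
  rw [← h, mk_add_const_eq, add_pow, map_sum]
  refine Finset.sum_congr rfl fun j hj => ?_
  have hjk : j ≤ k := Nat.lt_succ_iff.mp (Finset.mem_range.mp hj)
  rw [← coeff_X_pow_mul_geom_pow k n j hk]
  have e : (PowerSeries.X * (PowerSeries.mk 1 : PowerSeries ℤ) ^ 2) ^ j
        * (PowerSeries.C (α : ℤ) * PowerSeries.mk 1) ^ (k - j) * (k.choose j : PowerSeries ℤ)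
      = PowerSeries.C ((k.choose j : ℤ) * (α : ℤ) ^ (k - j))
        * (PowerSeries.X ^ j * (PowerSeries.mk 1 : PowerSeries ℤ) ^ (k + j)) := by
    rw [show k + j = 2 * j + (k - j) by omega]
    simp only [map_mul, map_pow, map_natCast]
    ring
  rw [e, PowerSeries.coeff_C_mul]
  ring
end

section
/- Let s ≥ 1, k ≥ 1 and n be integers with n ≥ s·k. Then the number of partitions of {1,…,n} into k ordered lists, each list containing at least s elements, multiplied by k!, equals n!·C(n−(s−1)k−1, k−1). -/
/-!
Both sides count the sequences `L = [l₁, …, l_k]` of lists of length at least `s` whose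
concatenation is an arrangement of `{1,…,n}` (`LinearListPartition`).

* Forgetting the order of `L` yields a partition into `k` lists. The lists of `L` are pairwise
  distinct, being disjoint and nonempty (this is where `1 ≤ s` enters), so each partition arises
  from exactly `k!` sequences (`card_linear_eq_left`).
* `L` is determined by its concatenation, one of `n!` arrangements of `{1,…,n}`, together with the
  lengths of its members, an arbitrary sequence of `k` integers `≥ s` with sum `n`
  (`card_linear_eq_right`). Subtracting `s` from every length and applying stars and bars, there
  are `C(n - (s-1)k - 1, k - 1)` such sequences (`card_lengths`).
-/

/-- A partition of `{1,…,n}` (modeled as `Fin n`) into `k` ordered lists, each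
duplicate-free and containing at least `s` elements: a finset `P` of lists
of cardinality `k`, whose lists are nodup and of length at least `s`, and
such that every element occurs in exactly one list of `P`. -/
def IsListPartition (n s k : ℕ) (P : Finset (List (Fin n))) : Prop :=
  P.card = k ∧ (∀ l ∈ P, l.Nodup ∧ s ≤ l.length) ∧
    ∀ x : Fin n, ∃! l : List (Fin n), l ∈ P ∧ x ∈ l

/-- The sequences of `k` lists, each of length at least `s`, whose concatenation is an arrangement
of `Fin n`: for `1 ≤ s`, list partitions together with a linear order on their members. -/
def LinearListPartition (n s k : ℕ) : Type :=
  {L : List (List (Fin n)) // L.flatten.Perm (List.finRange n) ∧ L.length = k ∧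
    ∀ l ∈ L, s ≤ l.length}

/-- The sequences of `k` integers, each at least `s`, with sum `n`. -/
def LengthSeq (n s k : ℕ) : Type :=
  {c : List ℕ // c.sum = n ∧ c.length = k ∧ ∀ a ∈ c, s ≤ a}

lemma finite_perm {α : Type*} (l : List α) : Finite {l' : List α // l'.Perm l} := by
  classical
  exact Finite.of_equiv {l' // l' ∈ l.permutations.toFinset}
    (Equiv.subtypeEquivRight (by simp))

lemma card_perm {α : Type*} (l : List α) (h : l.Nodup) :
    Nat.card {l' : List α // l'.Perm l} = l.length.factorial := by
  classical
  rw [← Nat.card_congr (Equiv.subtypeEquivRight (p := (· ∈ l.permutations.toFinset)) (by simp)),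
    Nat.card_eq_fintype_card, Fintype.card_coe]
  simp [List.toFinset_card_of_nodup (List.nodup_permutations l h), List.length_permutations]

lemma card_lengths (n s k : ℕ) (hs : 1 ≤ s) (hk : 1 ≤ k) (hn : s * k ≤ n) :
    Nat.card (LengthSeq n s k) = Nat.choose (n - (s - 1) * k - 1) (k - 1) := by
  have e : {P : Fin k → ℕ // ∑ i, P i = n - s * k} ≃ LengthSeq n s k := by
    refine Equiv.ofBijective (fun P => ⟨List.ofFn fun i => P.1 i + s, ?_, by simp, ?_⟩) ⟨?_, ?_⟩
    · rw [List.sum_ofFn, Finset.sum_add_distrib, P.2]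
      simp [Nat.mul_comm k s, hn]
    · intro a ha
      obtain ⟨i, rfl⟩ := List.mem_ofFn.1 ha
      exact Nat.le_add_left _ _
    · intro P Q h
      have h := List.ofFn_injective (congrArg Subtype.val h)
      ext i
      simpa using congrFun h i
    · rintro ⟨c, hc, rfl, hcs⟩
      have hget : ∀ i : Fin c.length, c.get i - s + s = c.get i := fun i =>
        Nat.sub_add_cancel (hcs _ (List.get_mem _ _))
      refine ⟨⟨fun i => c.get i - s, ?_⟩, Subtype.ext ?_⟩
      · have h : ∑ i : Fin c.length, (c.get i - s + s) = n := by
          simp only [hget]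
          rw [← List.sum_ofFn, List.ofFn_get, hc]
        rw [Finset.sum_add_distrib] at h
        simp only [Finset.sum_const, Finset.card_univ, Fintype.card_fin, smul_eq_mul] at h
        rw [Nat.mul_comm] at h
        exact Nat.eq_sub_of_add_eq h
      · simp only [hget]
        exact List.ofFn_get c
  rw [← Nat.card_congr e, ← Nat.card_congr (Sym.equivNatSumOfFintype (Fin k) (n - s * k)),
    Nat.card_eq_fintype_card, Sym.card_sym_eq_choose, Fintype.card_fin]
  obtain ⟨t, rfl⟩ := Nat.exists_eq_add_of_le' hs
  obtain ⟨m, rfl⟩ := Nat.exists_eq_add_of_le hn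
  have h1 : (t + 1) * k + m - (t + 1) * k = m := by omega
  have h2 : (t + 1) * k + m - (t + 1 - 1) * k - 1 = k - 1 + m := by
    rw [Nat.add_sub_cancel, Nat.add_mul]; omega
  rw [h1, h2, show k + m - 1 = k - 1 + m by omega, Nat.choose_symm_add]

/-- A sequence of lists amounts to its concatenation together with the lengths of its members. -/
lemma card_linear_eq_right (n s k : ℕ) :
    Nat.card (LinearListPartition n s k) = n.factorial * Nat.card (LengthSeq n s k) := by
  have e : LinearListPartition n s k ≃
      {l : List (Fin n) // l.Perm (List.finRange n)} × LengthSeq n s k := by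
    refine Equiv.ofBijective (fun L => (⟨L.1.flatten, L.2.1⟩, ⟨L.1.map List.length, ?_, ?_, ?_⟩))
      ⟨?_, ?_⟩
    · rw [← List.length_flatten, L.2.1.length_eq, List.length_finRange]
    · rw [List.length_map, L.2.2.1]
    · simpa using L.2.2.2
    · intro L M h
      exact Subtype.ext (List.eq_iff_flatten_eq.2
        ⟨congrArg (·.1.1) h, congrArg (·.2.1) h⟩)
    · rintro ⟨⟨l, hl⟩, ⟨c, hc, hck, hcs⟩⟩
      have hlen : l.length = c.sum := by rw [hl.length_eq, List.length_finRange, hc]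
      have h1 := List.flatten_splitLengths l c hlen.le
      have h2 := List.map_splitLengths_length l c hlen.ge
      refine ⟨⟨c.splitLengths l, by rwa [h1], by simpa using hck, fun x hx => hcs _ ?_⟩, ?_⟩
      · rw [← h2]
        exact List.mem_map_of_mem hx
      · exact Prod.ext (Subtype.ext h1) (Subtype.ext h2)
  rw [Nat.card_congr e, Nat.card_prod, card_perm _ (List.nodup_finRange n), List.length_finRange]

lemma isListPartition_of_perm {n s k : ℕ} {P : Finset (List (Fin n))} {L : List (List (Fin n))}
    (hL : L.Perm P.toList) (hP : IsListPartition n s k P) :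
    L.flatten.Perm (List.finRange n) ∧ L.length = k ∧ ∀ l ∈ L, s ≤ l.length := by
  obtain ⟨hk, hl, hx⟩ := hP
  have hmem : ∀ l, l ∈ L ↔ l ∈ P := fun l => by rw [hL.mem_iff, Finset.mem_toList]
  have hnd : L.Nodup := hL.nodup_iff.2 P.nodup_toList
  refine ⟨?_, by rw [hL.length_eq, Finset.length_toList, hk],
    fun l h => (hl l ((hmem l).1 h)).2⟩
  have hflat : L.flatten.Nodup := by
    refine List.nodup_flatten.2 ⟨fun l h => (hl l ((hmem l).1 h)).1, ?_⟩
    refine hnd.pairwise_of_forall_ne fun a ha b hb hab => ?_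
    intro x hxa hxb
    exact hab ((hx x).unique ⟨(hmem a).1 ha, hxa⟩ ⟨(hmem b).1 hb, hxb⟩)
  rw [List.perm_ext_iff_of_nodup hflat (List.nodup_finRange n)]
  intro x
  obtain ⟨l, ⟨h1, h2⟩, -⟩ := hx x
  exact ⟨fun _ => List.mem_finRange x, fun _ => List.mem_flatten.2 ⟨l, (hmem l).2 h1, h2⟩⟩

/-- The members of a sequence in `LinearListPartition n s k` are distinct, because two equal
disjoint lists would be empty. -/
lemma nodup_of_linear {n s k : ℕ} (hs : 1 ≤ s) (L : LinearListPartition n s k) : L.1.Nodup := by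
  have hflat := L.2.1.nodup_iff.2 (List.nodup_finRange n)
  refine (List.nodup_flatten.1 hflat).2.imp_of_mem fun {a b} ha _ hab => ?_
  rintro rfl
  have h0 : a = [] := List.eq_nil_iff_forall_not_mem.2 fun _ hx => hab hx hx
  have := L.2.2.2 a ha
  simp [h0] at this
  omega

lemma isListPartition_toFinset {n s k : ℕ} (hs : 1 ≤ s) (L : LinearListPartition n s k) :
    IsListPartition n s k L.1.toFinset := by
  have hnd := nodup_of_linear hs L
  have hflat := L.2.1.nodup_iff.2 (List.nodup_finRange n)
  obtain ⟨h1, h2⟩ := List.nodup_flatten.1 hflat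
  refine ⟨by rw [List.toFinset_card_of_nodup hnd, L.2.2.1], fun l hl => ?_, fun x => ?_⟩
  · rw [List.mem_toFinset] at hl
    exact ⟨h1 l hl, L.2.2.2 l hl⟩
  · obtain ⟨l, hl, hxl⟩ := List.mem_flatten.1 (L.2.1.mem_iff.2 (List.mem_finRange x))
    refine ⟨l, ⟨List.mem_toFinset.2 hl, hxl⟩, fun m hm => ?_⟩
    by_contra hne
    have : Std.Symm (List.Disjoint (α := Fin n)) := ⟨fun _ _ h => h.symm⟩
    exact h2.forall (List.mem_toFinset.1 hm.1) hl hne hm.2 hxl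

/-- Each list partition into `k` lists arises from exactly `k!` sequences. -/
lemma card_linear_eq_left (n s k : ℕ) (hs : 1 ≤ s) :
    Nat.card (LinearListPartition n s k) =
      Nat.card {P : Finset (List (Fin n)) // IsListPartition n s k P} * k.factorial := by
  let X := {P : Finset (List (Fin n)) // IsListPartition n s k P}
  have e : (Σ P : X, {L : List (List (Fin n)) // L.Perm P.1.toList}) ≃
      LinearListPartition n s k := by
    refine Equiv.ofBijective (fun q => ⟨q.2.1, isListPartition_of_perm q.2.2 q.1.2⟩) ⟨?_, ?_⟩
    · rintro ⟨⟨P, hP⟩, ⟨L, hL⟩⟩ ⟨⟨Q, hQ⟩, ⟨M, hM⟩⟩ h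
      obtain rfl : L = M := congrArg Subtype.val h
      obtain rfl : P = Q := by
        ext x
        rw [← Finset.mem_toList, ← hL.mem_iff, hM.mem_iff, Finset.mem_toList]
      rfl
    · intro L
      exact ⟨⟨⟨_, isListPartition_toFinset hs L⟩,
        ⟨L.1, (List.toFinset_toList (nodup_of_linear hs L)).symm⟩⟩, rfl⟩
  have f : ∀ P : X, {L : List (List (Fin n)) // L.Perm P.1.toList} ≃ Fin k.factorial := fun P =>
    haveI := finite_perm P.1.toList
    Finite.equivFinOfCardEq (by
      rw [card_perm _ P.1.nodup_toList, Finset.length_toList, P.2.1])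
  rw [← Nat.card_congr e,
    Nat.card_congr ((Equiv.sigmaCongrRight f).trans (Equiv.sigmaEquivProd _ _)),
    Nat.card_prod, Nat.card_fin]

theorem card_list_partitions (n s k : ℕ) (hs : 1 ≤ s) (hk : 1 ≤ k) (hn : s * k ≤ n) :
    Nat.card {P : Finset (List (Fin n)) // IsListPartition n s k P} * k.factorial
      = n.factorial * Nat.choose (n - (s - 1) * k - 1) (k - 1) := by
  rw [← card_linear_eq_left n s k hs, card_linear_eq_right, card_lengths n s k hs hk hn]
end

section
/- Let s ≥ 1, k ≥ 1 and n be integers with n ≥ s·k. Then L^(s)(n,k) = C(n−1, s−1)·s!·L^(s)(n−s, k−1) + (n+k−1)·L^(s)(n−1, k). -/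
/-!
Write `s = t + 1`, `k = j + 1`, `n = s * k + m`. In the nonzero range the definition reads
`k! * L(n, k) = n! * C(j + m, j)`. Since `C(n-1, s-1) * s! * (n-s)! = s * (n-1)!`, multiplying the
recurrence by `k!` and cancelling `(n-1)!` leaves, for `j ≥ 1`,
`n * C(j+m, j) = s * k * C(j+m-1, j-1) + (n + j) * C(j+m-1, j)`,
which is Pascal's rule combined with the absorption identity
`m * C(j+m-1, j-1) = j * C(j+m-1, j)`. The boundary cases `m = 0` (the last term of the recurrence
vanishes) and `j = 0` (the value of `L(n-s, 0)` is an indicator) are treated apart.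
-/

/-- The `s`-associated Lah number `L^(s)(n,k)`. -/
def assocLah (s n k : ℕ) : ℕ :=
  if k = 0 then (if n = 0 then 1 else 0)
  else if n < s * k then 0
  else (n.factorial / k.factorial) * Nat.choose (n - (s - 1) * k - 1) (k - 1)

/-- The closed form with the division cleared; `m` is the excess of `n` over `s * k`. -/
lemma assocLah_mul_factorial (t j m : ℕ) :
    (j + 1).factorial * assocLah (t + 1) ((t + 1) * (j + 1) + m) (j + 1)
      = ((t + 1) * (j + 1) + m).factorial * (j + m).choose j := by
  have h1 : ¬ ((t + 1) * (j + 1) + m < (t + 1) * (j + 1)) := by omega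
  have h2 : (t + 1) * (j + 1) + m - (t + 1 - 1) * (j + 1) - 1 = j + m := by
    have : (t + 1) * (j + 1) + m = t * (j + 1) + (j + m + 1) := by ring
    rw [this, Nat.add_sub_cancel, Nat.add_sub_cancel_left, Nat.add_sub_cancel]
  have h3 : (j + 1).factorial ∣ ((t + 1) * (j + 1) + m).factorial :=
    Nat.factorial_dvd_factorial (by nlinarith [Nat.zero_le (t * (j + 1))])
  unfold assocLah
  rw [if_neg (Nat.succ_ne_zero j), if_neg h1, h2, ← mul_assoc, Nat.mul_div_cancel' h3,
    Nat.add_sub_cancel]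

lemma assocLah_eq_zero (s n k : ℕ) (hk : k ≠ 0) (h : n < s * k) : assocLah s n k = 0 := by
  simp [assocLah, hk, h]

lemma choose_mul_factorial_shift (t r : ℕ) :
    (r + t).choose t * (t + 1).factorial * r.factorial = (t + 1) * (r + t).factorial := by
  have := Nat.add_choose_mul_factorial_mul_factorial r t
  rw [Nat.factorial_succ, ← this]
  ring

theorem assocLah_triangular_rec (s n k : ℕ) (hs : 1 ≤ s) (hk : 1 ≤ k) (hn : s * k ≤ n) :
    assocLah s n k
      = Nat.choose (n - 1) (s - 1) * s.factorial * assocLah s (n - s) (k - 1)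
        + (n + k - 1) * assocLah s (n - 1) k := by
  obtain ⟨t, rfl⟩ := Nat.exists_eq_add_of_le' hs
  obtain ⟨j, rfl⟩ := Nat.exists_eq_add_of_le' hk
  obtain ⟨m, rfl⟩ := Nat.exists_eq_add_of_le hn
  apply Nat.eq_of_mul_eq_mul_left (Nat.factorial_pos (j + 1))
  have e1 : (t + 1) * (j + 1) + m - 1 = ((t + 1) * j + m) + t := by
    have : (t + 1) * (j + 1) + m = ((t + 1) * j + m) + t + 1 := by ring
    omega
  have e2 : (t + 1) * (j + 1) + m - (t + 1) = (t + 1) * j + m := by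
    have : (t + 1) * (j + 1) + m = ((t + 1) * j + m) + (t + 1) := by ring
    omega
  have e3 : (t + 1) * (j + 1) + m + (j + 1) - 1 = (t + 1) * (j + 1) + m + j := by omega
  have e4 : (t + 1) * (j + 1) + m = ((t + 1) * j + m + t) + 1 := by ring
  have hL := assocLah_mul_factorial t j m
  have hC := choose_mul_factorial_shift t ((t + 1) * j + m)
  have hF : ((t + 1) * (j + 1) + m).factorial
      = ((t + 1) * (j + 1) + m) * ((t + 1) * j + m + t).factorial := by
    rw [e4, Nat.factorial_succ]
  rw [hL, hF, e1, e2, e3, Nat.add_sub_cancel, Nat.add_sub_cancel]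
  -- The last term of the recurrence; its closed form needs a positive excess `m`.
  have hR : (j + 1).factorial * assocLah (t + 1) ((t + 1) * j + m + t) (j + 1)
      = if m = 0 then 0 else ((t + 1) * j + m + t).factorial * (j + m - 1).choose j := by
    rcases m with _ | m
    · rw [assocLah_eq_zero _ _ _ (Nat.succ_ne_zero j) (by rw [Nat.mul_succ]; omega)]
      simp
    · have := assocLah_mul_factorial t j m
      have e : (t + 1) * j + (m + 1) + t = (t + 1) * (j + 1) + m := by ring
      rw [e, this]
      simp [← add_assoc]
  rw [Nat.mul_add (j + 1).factorial, mul_left_comm (j + 1).factorial ((t + 1) * (j + 1) + m + j), hR]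
  rcases j with _ | i
  · rcases m with _ | m
    · simp [assocLah, Nat.factorial_succ]
    · simp [assocLah]
  · have hM := assocLah_mul_factorial t i m
    have hA : (i + 1 + 1).factorial * (((t + 1) * (i + 1) + m + t).choose t * (t + 1).factorial
          * assocLah (t + 1) ((t + 1) * (i + 1) + m) (i + 1))
        = (i + 2) * (t + 1) * ((t + 1) * (i + 1) + m + t).factorial * (i + m).choose i := by
      rw [Nat.factorial_succ (i + 1)]
      linear_combination (i + 2) * ((t + 1) * (i + 1) + m + t).choose t * (t + 1).factorial * hM
        + (i + 2) * (i + m).choose i * hC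
    rw [hA]
    rcases m with _ | m
    · simp only [add_zero, Nat.choose_self, if_true, mul_zero, mul_one]
      ring
    · have hP : (i + 1 + (m + 1)).choose (i + 1)
          = (i + (m + 1)).choose i + (i + (m + 1)).choose (i + 1) := by
        rw [show i + 1 + (m + 1) = (i + (m + 1)) + 1 by ring, Nat.choose_succ_succ]
      have hB : (i + (m + 1)).choose (i + 1) * (i + 1) = (i + (m + 1)).choose i * (m + 1) := by
        rw [Nat.choose_succ_right_eq, Nat.add_sub_cancel_left]
      have e5 : i + 1 + (m + 1) - 1 = i + (m + 1) := by omega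
      rw [if_neg (Nat.succ_ne_zero m), hP, e5]
      linear_combination ((t + 1) * (i + 1) + (m + 1) + t).factorial * hB.symm
end

section
/- Let s ≥ 1, k ≥ 1 and n be integers with n ≥ s·k. Then, as rational numbers, L^(s)(n,k) = (n!/((n−s)!·k))·L^(s)(n−s, k−1) + n·L^(s)(n−1, k). -/
/-- The defining formula in terms of the excess `m = n - s * k`, with the division by `k!` taken
in `ℚ`; the natural-number division in `assocLah` is exact because `k ≤ n`. -/
theorem assocLah_excess (s j m n : ℕ) (hs : 1 ≤ s) (hn : n = s * (j + 1) + m) :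
    (assocLah s n (j + 1) : ℚ)
      = (n.factorial : ℚ) / (j + 1).factorial * ((j + m).choose j : ℚ) := by
  obtain ⟨t, rfl⟩ := Nat.exists_eq_add_of_le' hs
  have hle : j + 1 ≤ n := by rw [hn]; nlinarith [Nat.zero_le (t * (j + 1))]
  have harg : n - (t + 1 - 1) * (j + 1) - 1 = j + m := by
    rw [hn, Nat.add_sub_cancel, Nat.add_mul]; omega
  have hlt : ¬ n < (t + 1) * (j + 1) := by omega
  rw [assocLah, if_neg (Nat.succ_ne_zero j), if_neg hlt, harg, Nat.add_sub_cancel, Nat.cast_mul,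
    Nat.cast_div (Nat.factorial_dvd_factorial hle) (by positivity)]

theorem assocLah_rational_rec (s n k : ℕ) (hs : 1 ≤ s) (hk : 1 ≤ k) (hn : s * k ≤ n) :
    (assocLah s n k : ℚ)
      = (n.factorial : ℚ) / ((n - s).factorial * k) * assocLah s (n - s) (k - 1)
        + n * assocLah s (n - 1) k := by
  obtain ⟨j, rfl⟩ := Nat.exists_eq_add_of_le' hk
  obtain ⟨m, hm⟩ := Nat.exists_eq_add_of_le hn
  have hsub : n - s = s * j + m := by rw [hm, Nat.mul_succ]; omega
  have hpos : 1 ≤ n := hs.trans (by rw [hm, Nat.mul_succ]; omega)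
  have hfac : (n.factorial : ℚ) = n * (n - 1).factorial := by
    exact_mod_cast (Nat.mul_factorial_pred (by omega : n ≠ 0)).symm
  have h0 : ((n - s).factorial : ℚ) ≠ 0 := by positivity
  have hj : ((j + 1).factorial : ℚ) = (j + 1) * j.factorial := by
    rw [Nat.factorial_succ]; push_cast; rfl
  rw [assocLah_excess s j m n hs hm, Nat.add_sub_cancel]
  -- The second term: it vanishes when the excess is zero.
  have hB : (n : ℚ) * assocLah s (n - 1) (j + 1)
      = (n.factorial : ℚ) / (j + 1).factorial * (if m = 0 then 0 else ((j + m - 1).choose j : ℚ)) := by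
    rcases m with _ | m
    · have : n - 1 < s * (j + 1) := by omega
      simp [assocLah, this]
    · rw [assocLah_excess s j m (n - 1) hs (by omega), hfac]
      simp only [Nat.add_one_ne_zero, if_false, ← Nat.add_assoc, Nat.add_sub_cancel]
      ring
  rw [hB]
  rcases j with _ | i
  · rcases m with _ | m
    · simp [assocLah, hsub]
    · simp [assocLah, hsub]
  · rw [assocLah_excess s i m (n - s) hs hsub, hj]
    have hi : ((i + 1).factorial : ℚ) ≠ 0 := by positivity
    have hpascal : ((i + 1 + m).choose (i + 1) : ℚ)
        = (i + m).choose i + (if m = 0 then 0 else ((i + 1 + m - 1).choose (i + 1) : ℚ)) := by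
      rcases m with _ | m
      · simp
      · rw [if_neg (Nat.succ_ne_zero m), show i + 1 + (m + 1) = (i + (m + 1)) + 1 by omega,
          Nat.choose_succ_succ, Nat.add_sub_cancel]
        push_cast; rfl
    rw [hpascal]
    push_cast
    field_simp
end

section
/- Let s ≥ 1, k ≥ 1, n and p be integers with n ≥ s·k and 0 ≤ p ≤ k. Then, as rational numbers, L^(s)(n,k) = (n!/k!)·∑_{i=0}^{p} ((k−i)! / (n−p−(s−1)i)!)·C(p,i)·L^(s)(n−(s−1)i−p, k−i). -/
/-- The number of compositions of `m` into `k` positive parts: `C(m - 1, k - 1)`, except that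
for `m = 0` or `k = 0` it is `1` if `m = k = 0` and `0` otherwise. -/
def compCount : ℕ → ℕ → ℕ
  | 0, 0 => 1
  | 0, _ + 1 => 0
  | _ + 1, 0 => 0
  | m + 1, k + 1 => m.choose k

/-- Ordering the `k` lists of a partition and forgetting the labels of the elements leaves a
composition of `m`, since each list has `t` compulsory elements in addition to a positive part. -/
lemma assocLah_normalised (t m k : ℕ) :
    (k.factorial : ℚ) / (t * k + m).factorial * assocLah (t + 1) (t * k + m) k
      = compCount m k := by
  rcases k with _ | k
  · rcases m with _ | m <;> simp [assocLah, compCount]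
  · have hlt : t * (k + 1) + m < (t + 1) * (k + 1) ↔ m < k + 1 := by
      rw [add_mul t 1, one_mul]; omega
    by_cases h : m < k + 1
    · have h0 : compCount m (k + 1) = 0 := by
        rcases m with _ | m
        · rfl
        · exact Nat.choose_eq_zero_of_lt (by omega)
      simp [assocLah, hlt, h, h0]
    · obtain ⟨m, rfl⟩ : ∃ r, m = r + 1 := ⟨m - 1, by omega⟩
      have hdvd : (k + 1).factorial ∣ (t * (k + 1) + (m + 1)).factorial :=
        Nat.factorial_dvd_factorial (by omega)
      have hsub : t * (k + 1) + (m + 1) - t * (k + 1) - 1 = m := by omega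
      have h1 : ((k + 1).factorial : ℚ) ≠ 0 := by exact_mod_cast Nat.factorial_ne_zero _
      have h2 : ((t * (k + 1) + (m + 1)).factorial : ℚ) ≠ 0 := by
        exact_mod_cast Nat.factorial_ne_zero _
      rw [assocLah, if_neg (Nat.succ_ne_zero k), if_neg (by rwa [hlt]), Nat.add_sub_cancel, hsub,
        Nat.add_sub_cancel, Nat.cast_mul, Nat.cast_div hdvd h1, compCount]
      field_simp

/-- Vandermonde's convolution for composition counts. -/
lemma compCount_vandermonde (m k p : ℕ) (hk : 1 ≤ k) (hkm : k ≤ m) (hp : p ≤ k) :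
    compCount m k
      = ∑ i ∈ Finset.range (p + 1), p.choose i * compCount (m - p) (k - i) := by
  -- Summands with `i > p` vanish, so the range can be extended to `i ≤ k`.
  have hext : ∑ i ∈ Finset.range (p + 1), p.choose i * compCount (m - p) (k - i)
      = ∑ i ∈ Finset.range (k + 1), p.choose i * compCount (m - p) (k - i) := by
    apply Finset.sum_subset
    · intro i hi
      simp only [Finset.mem_range] at *
      omega
    · intro i _ hi
      rw [Nat.choose_eq_zero_of_lt (by simpa using hi), zero_mul]
  obtain ⟨k, rfl⟩ : ∃ j, k = j + 1 := ⟨k - 1, by omega⟩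
  rw [hext, Finset.sum_range_succ]
  rcases hr : m - p with _ | r
  · obtain rfl : m = k + 1 := by omega
    obtain rfl : p = k + 1 := by omega
    rw [Finset.sum_eq_zero]
    · simp [compCount]
    · intro i hi
      rw [Finset.mem_range] at hi
      rw [show k + 1 - i = (k - i) + 1 by omega, compCount, mul_zero]
  · obtain rfl : m = (p + r) + 1 := by omega
    rw [Nat.sub_self, compCount, compCount, mul_zero, add_zero, Nat.add_choose_eq,
      Finset.Nat.sum_antidiagonal_eq_sum_range_succ_mk]
    refine Finset.sum_congr rfl fun i hi => ?_
    rw [Finset.mem_range] at hi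
    rw [show k + 1 - i = (k - i) + 1 by omega, compCount]

theorem assocLah_vandermonde (s n k p : ℕ) (hs : 1 ≤ s) (hk : 1 ≤ k) (hn : s * k ≤ n)
    (hp : p ≤ k) :
    (assocLah s n k : ℚ)
      = (n.factorial : ℚ) / k.factorial *
          ∑ i ∈ Finset.range (p + 1),
            ((k - i).factorial : ℚ) / (n - p - (s - 1) * i).factorial
              * Nat.choose p i * assocLah s (n - (s - 1) * i - p) (k - i) := by
  obtain ⟨t, rfl⟩ : ∃ t, s = t + 1 := ⟨s - 1, by omega⟩
  rw [add_mul, one_mul] at hn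
  obtain ⟨m, rfl⟩ : ∃ m, n = t * k + m := ⟨n - t * k, by omega⟩
  have hkm : k ≤ m := by omega
  have hsum : ∑ i ∈ Finset.range (p + 1),
      ((k - i).factorial : ℚ) / (t * k + m - p - (t + 1 - 1) * i).factorial
        * Nat.choose p i * assocLah (t + 1) (t * k + m - (t + 1 - 1) * i - p) (k - i)
      = compCount m k := by
    rw [compCount_vandermonde m k p hk hkm hp, Nat.cast_sum]
    refine Finset.sum_congr rfl fun i hi => ?_
    rw [Finset.mem_range] at hi
    have hmul : t * k = t * (k - i) + t * i := by rw [← mul_add]; congr 1; omega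
    have e1 : t * k + m - p - (t + 1 - 1) * i = t * (k - i) + (m - p) := by
      rw [Nat.add_sub_cancel]; omega
    have e2 : t * k + m - (t + 1 - 1) * i - p = t * (k - i) + (m - p) := by
      rw [Nat.add_sub_cancel]; omega
    rw [e1, e2, Nat.cast_mul, ← assocLah_normalised t (m - p) (k - i)]
    ring
  rw [hsum, ← assocLah_normalised t m k]
  have h1 : (k.factorial : ℚ) ≠ 0 := by exact_mod_cast Nat.factorial_ne_zero _
  have h2 : ((t * k + m).factorial : ℚ) ≠ 0 := by exact_mod_cast Nat.factorial_ne_zero _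
  field_simp
end

section
/- Let s ≥ 1, k ≥ 1 and n be integers with n ≥ s·k. Then L^(s)(n,k) = ∑_{i=s(k−1)}^{n−s} (n−i)!·C(n−1, i)·L^(s)(i, k−1). -/
/-- The weighted hockey-stick identity. -/
lemma sum_weighted_choose (t r d : ℕ) :
    ∑ j ∈ Finset.range (d + 1), (t + 1 + d - j) * (j + r).choose r
      = (d + r + 2).choose (r + 2) + t * (d + r + 1).choose (r + 1) := by
  induction d with
  | zero => simp; ring
  | succ d ih =>
    rw [Finset.sum_range_succ]
    have h : ∀ j ∈ Finset.range (d + 1), (t + 1 + (d + 1) - j) * (j + r).choose r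
        = (t + 1 + d - j) * (j + r).choose r + (j + r).choose r := by
      intro j hj
      rw [Finset.mem_range] at hj
      rw [show t + 1 + (d + 1) - j = (t + 1 + d - j) + 1 by omega]
      ring
    rw [Finset.sum_congr rfl h, Finset.sum_add_distrib, ih, Nat.sum_range_add_choose,
      show t + 1 + (d + 1) - (d + 1) = t + 1 by omega,
      show d + 1 + r + 2 = (d + r + 2) + 1 by ring,
      show d + 1 + r + 1 = (d + r + 1) + 1 by ring,
      show d + 1 + r = d + r + 1 by ring,
      Nat.choose_succ_succ (d + r + 2) (r + 1), Nat.choose_succ_succ (d + r + 1) r]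
    ring

/-- Closed form on the support of `assocLah`, with the division by `k!` cleared and no truncated
subtraction. -/
lemma factorial_mul_assocLah (t k j : ℕ) :
    (k + 1).factorial * assocLah (t + 1) ((t + 1) * (k + 1) + j) (k + 1)
      = ((t + 1) * (k + 1) + j).factorial * (j + k).choose k := by
  have hle : k + 1 ≤ (t + 1) * (k + 1) + j := by nlinarith [Nat.zero_le (t * (k + 1))]
  have hsub : (t + 1) * (k + 1) + j - (t + 1 - 1) * (k + 1) - 1 = j + k := by
    rw [Nat.add_sub_cancel, add_mul]
    omega
  rw [assocLah, if_neg (Nat.succ_ne_zero k), if_neg (by omega), hsub, Nat.add_sub_cancel,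
    ← mul_assoc, Nat.mul_div_cancel' (Nat.factorial_dvd_factorial hle)]

lemma factorial_mul_choose_pred (n i : ℕ) (h : i < n) :
    (n - i).factorial * (n - 1).choose i * i.factorial = (n - i) * (n - 1).factorial := by
  rw [← Nat.choose_mul_factorial_mul_factorial (show i ≤ n - 1 by omega),
    show n - i = (n - 1 - i) + 1 by omega, Nat.factorial_succ]
  ring

theorem assocLah_vertical_rec (s n k : ℕ) (hs : 1 ≤ s) (hk : 1 ≤ k) (hn : s * k ≤ n) :
    assocLah s n k
      = ∑ i ∈ Finset.Icc (s * (k - 1)) (n - s),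
          (n - i).factorial * Nat.choose (n - 1) i * assocLah s i (k - 1) := by
  obtain ⟨t, rfl⟩ : ∃ t, s = t + 1 := ⟨s - 1, by omega⟩
  obtain ⟨d, rfl⟩ := Nat.exists_eq_add_of_le hn
  rcases k with _ | _ | r
  · omega
  · rw [Finset.sum_eq_single 0]
    · have h := factorial_mul_assocLah t 0 d
      simpa [assocLah] using h
    · intro i _ hi
      simp [assocLah, hi]
    · intro h
      simp at h
  · have hlo : (t + 1) * (r + 1 + 1) = (t + 1) * (r + 1) + (t + 1) := by ring
    apply Nat.eq_of_mul_eq_mul_left (Nat.factorial_pos (r + 2))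
    rw [factorial_mul_assocLah t (r + 1) d, Finset.mul_sum,
      show r + 1 + 1 - 1 = r + 1 from rfl,
      ← Finset.Ico_add_one_right_eq_Icc, Finset.sum_Ico_eq_sum_range,
      show (t + 1) * (r + 1 + 1) + d - (t + 1) + 1 - (t + 1) * (r + 1) = d + 1 by omega]
    set n := (t + 1) * (r + 1 + 1) + d with hndef
    have hterm : ∀ j ∈ Finset.range (d + 1),
        (r + 2).factorial * ((n - ((t + 1) * (r + 1) + j)).factorial *
          (n - 1).choose ((t + 1) * (r + 1) + j) *
            assocLah (t + 1) ((t + 1) * (r + 1) + j) (r + 1))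
        = (r + 2) * (n - 1).factorial * ((t + 1 + d - j) * (j + r).choose r) := by
      intro j hj
      rw [Finset.mem_range] at hj
      have h1 := factorial_mul_assocLah t r j
      have h2 := factorial_mul_choose_pred n ((t + 1) * (r + 1) + j) (by omega)
      have h3 : n - ((t + 1) * (r + 1) + j) = t + 1 + d - j := by omega
      rw [Nat.factorial_succ (r + 1)]
      calc _ = (r + 2) * ((n - ((t + 1) * (r + 1) + j)).factorial *
              (n - 1).choose ((t + 1) * (r + 1) + j)) * ((r + 1).factorial *
              assocLah (t + 1) ((t + 1) * (r + 1) + j) (r + 1)) := by ring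
        _ = (r + 2) * ((n - ((t + 1) * (r + 1) + j)).factorial *
              (n - 1).choose ((t + 1) * (r + 1) + j) * ((t + 1) * (r + 1) + j).factorial) *
              (j + r).choose r := by rw [h1]; ring
        _ = _ := by rw [h2, h3]; ring
    rw [Finset.sum_congr rfl hterm, ← Finset.mul_sum, sum_weighted_choose]
    have habs : (d + r + 2) * (d + r + 1).choose (r + 1)
        = (d + r + 2).choose (r + 2) * (r + 2) :=
      Nat.add_one_mul_choose_eq (d + r + 1) (r + 1)
    have hfac : n.factorial = n * (n - 1).factorial :=
      (Nat.mul_factorial_pred (by omega)).symm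
    have hn' : n = (d + r + 2) + t * (r + 2) := by rw [hndef]; ring
    rw [hfac, show d + (r + 1) = d + r + 1 by ring]
    generalize (n - 1).factorial = F
    rw [hn']
    linear_combination F * habs
end

section
/- For all integers n ≥ 0, k ≥ 1, r ≥ 0 and s ≥ 1, ∑_{j=0}^{r} C(r,j)·C(n+k+j−1, k+j−1)·(s−1)^{r−j} = ∑_{j=0}^{r} C(r,j)·C(n+k−1, k+j−1)·s^{r−j}. -/
/-!
Write `binomSum x f r = ∑ j ≤ r, C(r, j) f(j) x ^ (r - j)`, that is, `(x + E) ^ r` applied to `f` and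
evaluated at `0`, where `E` is the shift. It satisfies
`binomSum x f (r + 1) = x * binomSum x f r + binomSum x (E f) r` (`binomSum_succ`).

With `K = k - 1` and `t = s - 1`, the claim is that `binomSum t` of `j ↦ C(n + K + j, K + j)` equals
`binomSum (t + 1)` of `j ↦ C(n + K, K + j)`. By induction on `r` for all `K`, the recurrence turns the
left side at `r + 1` into `t G(n + K, K) + G(n + K + 1, K + 1)`, where
`G(N, K) = binomSum (t + 1) (j ↦ C(N, K + j)) r`. Pascal's rule gives
`G(N + 1, K + 1) = G(N, K) + G(N, K + 1)`, so this is `(t + 1) G(n + K, K) + G(n + K, K + 1)`, which is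
the right side at `r + 1`.
-/

/-- The sum `∑ j ≤ r, C(r, j) f(j) x ^ (r - j)`: the expansion of `(x + E) ^ r` applied to the
sequence `f` and evaluated at `0`, with `E` the shift operator. -/
def binomSum (x : ℕ) (f : ℕ → ℕ) (r : ℕ) : ℕ :=
  ∑ j ∈ Finset.range (r + 1), Nat.choose r j * f j * x ^ (r - j)

theorem binomSum_succ (x : ℕ) (f : ℕ → ℕ) (r : ℕ) :
    binomSum x f (r + 1) = x * binomSum x f r + binomSum x (fun j => f (j + 1)) r := by
  have h := Finset.sum_choose_succ_mul (R := ℕ) (fun i m => f i * x ^ m) r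
  simp only [Nat.cast_id, ← mul_assoc] at h
  unfold binomSum
  rw [h, Finset.mul_sum]
  congr 1
  refine Finset.sum_congr rfl fun j hj => ?_
  rw [Nat.succ_sub (Finset.mem_range_succ_iff.mp hj), pow_succ]
  ring

theorem binomSum_add (x : ℕ) (f g : ℕ → ℕ) (r : ℕ) :
    binomSum x (fun j => f j + g j) r = binomSum x f r + binomSum x g r := by
  simp only [binomSum, mul_add, add_mul, Finset.sum_add_distrib]

theorem binomSum_choose (n t r K : ℕ) :
    binomSum t (fun j => Nat.choose (n + K + j) (K + j)) r
      = binomSum (t + 1) (fun j => Nat.choose (n + K) (K + j)) r := by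
  induction r generalizing K with
  | zero => simp [binomSum]
  | succ r ih =>
    have shift : (fun j => Nat.choose (n + K + (j + 1)) (K + (j + 1)))
        = fun j => Nat.choose (n + (K + 1) + j) (K + 1 + j) := by
      funext j
      congr 1 <;> ring
    have pascal : (fun j => Nat.choose (n + (K + 1)) (K + 1 + j))
        = fun j => Nat.choose (n + K) (K + j) + Nat.choose (n + K) (K + (j + 1)) := by
      funext j
      rw [← add_assoc n, add_right_comm K 1 j, Nat.choose_succ_succ', add_assoc K j 1]
    rw [binomSum_succ, binomSum_succ, shift, ih K, ih (K + 1), pascal, binomSum_add]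
    ring

theorem choose_sum_identity (n k r s : ℕ) (hk : 1 ≤ k) (hs : 1 ≤ s) :
    ∑ j ∈ Finset.range (r + 1),
        Nat.choose r j * Nat.choose (n + k + j - 1) (k + j - 1) * (s - 1) ^ (r - j)
      = ∑ j ∈ Finset.range (r + 1),
          Nat.choose r j * Nat.choose (n + k - 1) (k + j - 1) * s ^ (r - j) := by
  obtain ⟨K, rfl⟩ := Nat.exists_eq_add_of_le' hk
  obtain ⟨t, rfl⟩ := Nat.exists_eq_add_of_le' hs
  have h1 (j : ℕ) : n + (K + 1) + j - 1 = n + K + j := by omega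
  have h2 (j : ℕ) : K + 1 + j - 1 = K + j := by omega
  have h3 : n + (K + 1) - 1 = n + K := by omega
  simp only [h1, h2, h3, Nat.add_sub_cancel]
  exact binomSum_choose n t r K
end

section
/- Let s ≥ 1, k ≥ 1, r and n be integers with 0 ≤ r ≤ k and n ≥ 0. Then ∑ (i_1+s)(i_2+s)⋯(i_r+s) = ∑_{j=0}^{r} C(r,j)·C(n+k+j−1, k+j−1)·(s−1)^{r−j}, where the left-hand sum ranges over all compositions (i_1,…,i_k) of n into k parts and only the first r entries are multiplied (the left-hand side is ∑ 1 = C(n+k−1, k−1) when r = 0). -/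
/-!
The proof compares coefficients of power series over `ℤ`. Write `G = ∑ xⁱ = 1 / (1 - x)`. Then
`∑ (i + s) xⁱ = G * (G + (s - 1))`, because `G ^ 2 = ∑ (i + 1) xⁱ`. The left-hand side is the
coefficient of `xⁿ` in `(G * (G + (s - 1))) ^ r * G ^ (k - r) = G ^ k * (G + (s - 1)) ^ r`
(`coeff_prod_mk`, `prod_weights`), and expanding `(G + (s - 1)) ^ r` by the binomial theorem
turns this into `∑ C(r, j) (s - 1) ^ (r - j) G ^ (k + j)`, whose coefficients are those on the
right.
-/

open PowerSeries in
/-- The coefficients of a product of `k` power series are sums over compositions into `k` parts. -/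
lemma coeff_prod_mk (k : ℕ) (f : Fin k → ℕ → ℤ) (n : ℕ) :
    coeff n (∏ i, mk (f i)) = ∑ t ∈ Finset.Nat.antidiagonalTuple k n, ∏ i, f i (t i) := by
  induction k generalizing n with
  | zero => cases n <;> simp [coeff_one]
  | succ k ih =>
    rw [Fin.prod_univ_succ, coeff_mul]
    -- A composition is its first part followed by a composition of the rest.
    have h : Finset.Nat.antidiagonalTuple (k + 1) n =
        (Finset.HasAntidiagonal.antidiagonal n).biUnion fun p =>
          (Finset.Nat.antidiagonalTuple k p.2).image (Fin.cons p.1) := by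
      ext t
      simp only [Finset.Nat.mem_antidiagonalTuple, Finset.mem_biUnion, Finset.HasAntidiagonal.mem_antidiagonal,
        Finset.mem_image, Prod.exists]
      constructor
      · intro h
        exact ⟨t 0, ∑ i, Fin.tail t i, by rw [← h, Fin.sum_univ_succ]; rfl, Fin.tail t, rfl,
          Fin.cons_self_tail t⟩
      · rintro ⟨a, b, h, u, hu, rfl⟩
        simp [Fin.sum_univ_succ, hu, h]
    rw [h, Finset.sum_biUnion]
    · refine Finset.sum_congr rfl fun p _ => ?_
      rw [Finset.sum_image fun u _ v _ e => Fin.cons_right_injective _ e, ih, coeff_mk,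
        Finset.mul_sum]
      simp [Fin.prod_univ_succ]
    · intro p hp q hq hpq
      simp only [Finset.disjoint_left, Finset.mem_image, Function.onFun]
      rintro _ ⟨u, _, rfl⟩ ⟨v, _, e⟩
      have e0 : q.1 = p.1 := by simpa using congrFun e 0
      have h1 := Finset.HasAntidiagonal.mem_antidiagonal.1 hp
      have h2 := Finset.HasAntidiagonal.mem_antidiagonal.1 hq
      exact hpq (Prod.ext e0.symm (by omega))

/-- Giving the last `k - r` parts weight `1` makes a product over the first `r` parts a product over
all `k`, the form `coeff_prod_mk` applies to. -/
lemma prod_weights {M : Type*} [CommMonoid M] (r k : ℕ) (hrk : r ≤ k) (a : Fin k → M) :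
    ∏ i, (if i.val < r then a i else 1) = ∏ i : Fin r, a (Fin.castLE hrk i) := by
  obtain ⟨m, rfl⟩ := Nat.exists_eq_add_of_le hrk
  rw [Fin.prod_univ_add]
  simp
  rfl

open PowerSeries in
/-- `∑ (i + c + 1) xⁱ = G * (G + c)` for `G = ∑ xⁱ`. -/
lemma mk_add_shift (c : ℤ) :
    (mk fun i : ℕ => (i : ℤ) + (c + 1)) = mk 1 * (mk 1 + C c) := by
  ext n
  rw [mul_add, ← pow_two, mk_one_pow_eq_mk_choose_add, map_add, coeff_mul_C]
  simp
  ring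

open PowerSeries in
theorem sum_prod_shifted_first_r (s k r n : ℕ) (hs : 1 ≤ s) (hk : 1 ≤ k) (hrk : r ≤ k) :
    ∑ t ∈ Finset.Nat.antidiagonalTuple k n, ∏ i : Fin r, (t (Fin.castLE hrk i) + s)
      = ∑ j ∈ Finset.range (r + 1),
          Nat.choose r j * Nat.choose (n + k + j - 1) (k + j - 1) * (s - 1) ^ (r - j) := by
  obtain ⟨c, rfl⟩ := Nat.exists_eq_add_of_le' hs
  obtain ⟨d, rfl⟩ := Nat.exists_eq_add_of_le' hk
  zify
  have hL := coeff_prod_mk (d + 1)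
    (fun i m => if i.val < r then (m : ℤ) + ((c : ℤ) + 1) else 1) n
  simp only [prod_weights r (d + 1) hrk] at hL
  push_cast
  rw [← hL]
  -- Every factor contains `G`, including the unweighted ones, which are `G` itself.
  have hfac : ∀ i : Fin (d + 1),
      (mk fun m : ℕ => if i.val < r then (m : ℤ) + ((c : ℤ) + 1) else 1)
        = mk 1 * (if i.val < r then mk 1 + C (c : ℤ) else 1) := by
    intro i
    split_ifs
    · exact mk_add_shift c
    · rw [mul_one]; rfl
  rw [Finset.prod_congr rfl fun i _ => hfac i, Finset.prod_mul_distrib,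
    prod_weights r (d + 1) hrk (fun _ => mk 1 + C (c : ℤ))]
  simp only [Finset.prod_const, Finset.card_univ, Fintype.card_fin]
  rw [add_pow, Finset.mul_sum, map_sum]
  refine Finset.sum_congr rfl fun j _ => ?_
  have e : (mk 1 : PowerSeries ℤ) ^ (d + 1) * (mk 1 ^ j * C (c : ℤ) ^ (r - j) * ((r.choose j : ℕ) : PowerSeries ℤ))
      = mk 1 ^ (d + j + 1) * C ((c : ℤ) ^ (r - j) * (r.choose j : ℤ)) := by
    rw [map_mul, map_pow, map_natCast C (r.choose j)]
    ring
  rw [e, coeff_mul_C, mk_one_pow_eq_mk_choose_add, coeff_mk,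
    show n + (d + 1) + j - 1 = d + j + n by omega, show d + 1 + j - 1 = d + j by omega]
  ring
end

section
/- Let s ≥ 1, k ≥ 1, r and n be integers with 0 ≤ r ≤ k and n ≥ s·k (so in particular r ≤ n). Then the number of partitions of {1,…,n} into k ordered lists, each list containing at least s elements and such that the elements 1,…,r lie in distinct lists, multiplied by (k−r)!, equals (n−r)!·∑_{j=0}^{r} C(r,j)·C(n+j−(s−1)k−1, k+j−1)·(s−1)^{r−j}. -/
/-!
Label the `k` lists by `Fin k` so that, for `i < r`, the list labelled `i` is the one containing
the element `i`. Since the first `r` elements lie in distinct lists, only the other `k - r` labels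
are free, so there are `(k - r)!` times as many labelled partitions as partitions
(`card_labelled_eq_mul`).

A labelled partition with list lengths `l` is a bijection from the pairs (label, position) onto the
elements such that element `i < r` sits in list `i`. There are `(n - r)! * ∏ i < r, l i` of them
(`card_positions`, `card_labelled_lengths`). Summing over all length vectors with entries `≥ s` and
sum `n`, the number of labelled partitions is `(n - r)!` times the coefficient of `x ^ n` in
`(∑ m ≥ s, m x ^ m) ^ r * (∑ m ≥ s, x ^ m) ^ (k - r)` (`card_labelled`).

Because `∑ m ≥ s, x ^ m = x ^ s / (1 - x)` and
`∑ m ≥ s, m x ^ m = x ^ s / (1 - x) * (1 / (1 - x) + (s - 1))`, this product is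
`x ^ (s k) / (1 - x) ^ k * (1 / (1 - x) + (s - 1)) ^ r`, and the binomial theorem together with
the expansion of `1 / (1 - x) ^ (k + j)` gives the claimed sum (`coeff_prod_lengthSeries`). In
`ℕ⟦X⟧` the series `1 / (1 - x)` is written `mk 1`.
-/

/-- A partition of `{1,…,n}` (modeled as `Fin n`) into `k` ordered lists, each
duplicate-free and containing at least `s` elements, such that the `r` first
elements (those with value `< r`) lie in distinct lists. -/
def IsRListPartition (n s k r : ℕ) (P : Finset (List (Fin n))) : Prop :=
  P.card = k ∧ (∀ l ∈ P, l.Nodup ∧ s ≤ l.length) ∧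
    (∀ x : Fin n, ∃! l : List (Fin n), l ∈ P ∧ x ∈ l) ∧
    ∀ l ∈ P, ∀ x y : Fin n, (x : ℕ) < r → (y : ℕ) < r → x ∈ l → y ∈ l → x = y

/-! ### Counting bijections -/

/-- A bijection between finite types of equal size that is prescribed, injectively, on the elements
satisfying `p` is completed by an arbitrary bijection between the two complements. -/
theorem card_equiv_extending {α β : Type} [Finite α] [Finite β] (h : Nat.card α = Nat.card β)
    (p : α → Prop) (g : {x // p x} → β) (hg : Function.Injective g) :
    Nat.card {e : α ≃ β // ∀ x (hx : p x), e x = g ⟨x, hx⟩}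
      = (Nat.card α - Nat.card {x // p x}).factorial := by
  classical
  have := Fintype.ofFinite α
  have := Fintype.ofFinite β
  let e₀ : ({x | p x} : Set α) ≃ Set.range g := Equiv.ofInjective g hg
  have e1 : {e : α ≃ β // ∀ x (hx : p x), e x = g ⟨x, hx⟩} ≃
      {e : α ≃ β // ∀ x : ({x | p x} : Set α), e x = e₀ x} :=
    Equiv.subtypeEquivRight fun e => by
      constructor
      · rintro h ⟨x, hx⟩
        exact h x hx
      · intro h x hx
        exact h ⟨x, hx⟩
  have hA : Nat.card ({x | p x}ᶜ : Set α) = Nat.card α - Nat.card {x // p x} := by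
    have := Set.ncard_compl ({x | p x} : Set α)
    rw [← Nat.card_coe_set_eq, ← Nat.card_coe_set_eq] at this
    exact this
  have hB : Nat.card ((Set.range g)ᶜ : Set β) = Nat.card α - Nat.card {x // p x} := by
    have := Set.ncard_compl (Set.range g)
    rw [← Nat.card_coe_set_eq, ← Nat.card_coe_set_eq, ← Nat.card_congr e₀, ← h] at this
    exact this
  obtain ⟨e2⟩ := (Finite.card_eq (α := ({x | p x}ᶜ : Set α)) (β := ((Set.range g)ᶜ : Set β))).1
    (hA.trans hB.symm)
  rw [Nat.card_congr (e1.trans (Equiv.Set.compl e₀)), ← hA, Nat.card_eq_fintype_card,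
    Fintype.card_equiv e2, Nat.card_eq_fintype_card]

/-- No finiteness of the index type is needed: both sides are `0` when it is infinite. -/
theorem card_sigma_const {α : Type} {β : α → Type} {m : ℕ} (hm : 0 < m)
    (h : ∀ a, Nat.card (β a) = m) : Nat.card (Σ a, β a) = Nat.card α * m := by
  have e : ∀ a, Nonempty (β a ≃ Fin m) := fun a => by
    have : Finite (β a) := Nat.finite_of_card_ne_zero (by rw [h]; omega)
    exact ⟨Finite.equivFinOfCardEq (h a)⟩
  have e := fun a => (e a).some
  rw [Nat.card_congr ((Equiv.sigmaCongrRight fun a => (e a)).trans (Equiv.sigmaEquivProd _ _))]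
  simp

theorem card_val_lt {n r : ℕ} (h : r ≤ n) : Nat.card {x : Fin n // (x : ℕ) < r} = r := by
  rw [Nat.card_congr (Fin.castLEquiv h).symm, Nat.card_fin]

/-! ### Labelled partitions -/

/-- Labelled version of `IsRListPartition`: the lists are indexed by `Fin k`, and for `i < r` the
list with label `i` is the one containing the element `i`. -/
def IsLabelled (n s k r : ℕ) (f : Fin k → List (Fin n)) : Prop :=
  (∀ i, (f i).Nodup ∧ s ≤ (f i).length) ∧ (∀ x, ∃! i, x ∈ f i) ∧
    ∀ (i : Fin k) (x : Fin n), (i : ℕ) = x → (x : ℕ) < r → x ∈ f i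

/-- A labelling of an `r`-list partition is a bijection from `Fin k` to its lists that is forced on
the labels `< r` (the lists containing `0, …, r - 1`), which leaves `(k - r)!` choices. -/
theorem card_labelled_eq_mul (n s k r : ℕ) (hs : 1 ≤ s) (hrk : r ≤ k) (hrn : r ≤ n) :
    Nat.card {f // IsLabelled n s k r f} =
      Nat.card {P // IsRListPartition n s k r P} * (k - r).factorial := by
  have hfib : ∀ P : {P // IsRListPartition n s k r P},
      Nat.card {e : Fin k ≃ {l // l ∈ P.1} //
        ∀ (i : Fin k) (x : Fin n), (i : ℕ) = x → (x : ℕ) < r → x ∈ (e i).1} =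
      (k - r).factorial := by
    rintro ⟨P, hc, hl, hx, hr⟩
    have hx' := hx
    choose F hF hFu using hx'
    have := card_equiv_extending (α := Fin k) (β := {l // l ∈ P}) (by simp [hc])
      (fun i => (i : ℕ) < r) (fun i => ⟨F ⟨i, by omega⟩, (hF _).1⟩) (by
        rintro ⟨i, hi⟩ ⟨j, hj⟩ hij
        have hij' : F ⟨i, by omega⟩ = F ⟨j, by omega⟩ := congrArg Subtype.val hij
        have := hr _ (hF ⟨i, by omega⟩).1 ⟨i, by omega⟩ ⟨j, by omega⟩ hi hj (hF _).2
          (by rw [hij']; exact (hF _).2)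
        simpa [Fin.ext_iff] using this)
    rw [card_val_lt hrk, Nat.card_fin] at this
    rw [← this]
    refine Nat.card_congr (Equiv.subtypeEquivRight fun e => ?_)
    constructor
    · intro h i hi
      exact Subtype.ext (hFu _ _ ⟨(e i).2, h i ⟨i, by omega⟩ rfl hi⟩)
    · rintro h i x hix hxr
      rw [h i (by omega)]
      have hxi : (⟨i, by omega⟩ : Fin n) = x := Fin.ext hix
      simp only [hxi]
      exact (hF x).2
  rw [← card_sigma_const (Nat.factorial_pos _) hfib]
  symm
  refine Nat.card_eq_of_bijective
    (fun Q => ⟨fun i => (Q.2.1 i).1, ?_, ?_, Q.2.2⟩) ⟨?_, ?_⟩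
  · intro i
    exact Q.1.2.2.1 _ (Q.2.1 i).2
  · intro x
    obtain ⟨l, ⟨hl, hxl⟩, hu⟩ := Q.1.2.2.2.1 x
    refine ⟨Q.2.1.symm ⟨l, hl⟩, by simpa using hxl, fun i hi => ?_⟩
    rw [Equiv.eq_symm_apply]
    exact Subtype.ext (hu _ ⟨(Q.2.1 i).2, hi⟩)
  · rintro ⟨⟨P, hP⟩, ⟨e, he⟩⟩ ⟨⟨P', hP'⟩, ⟨e', he'⟩⟩ h
    have h' : ∀ i, (e i).1 = (e' i).1 := fun i => congrFun (congrArg Subtype.val h) i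
    -- `P` is recovered as the range of the common list family.
    have hPP : P = P' := by
      ext l
      constructor
      · intro hl
        have := (e' (e.symm ⟨l, hl⟩)).2
        rw [← h'] at this
        simpa using this
      · intro hl
        have := (e (e'.symm ⟨l, hl⟩)).2
        rw [h'] at this
        simpa using this
    subst hPP
    have : e = e' := Equiv.ext fun i => Subtype.ext (h' i)
    subst this
    rfl
  · rintro ⟨f, hf, hx, hr⟩
    -- Distinct labels carry distinct lists because the lists are nonempty (`1 ≤ s`) and disjoint.
    have hinj : Function.Injective f := by
      intro i j hij
      have hpos : 0 < (f i).length := by have := (hf i).2; omega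
      have hm := List.getElem_mem hpos
      exact (hx _).unique hm (hij ▸ hm)
    let P : Finset (List (Fin n)) := Finset.univ.image f
    have hP : IsRListPartition n s k r P := by
      refine ⟨?_, ?_, ?_, ?_⟩
      · simp [P, Finset.card_image_of_injective _ hinj]
      · simpa [P] using hf
      · intro x
        obtain ⟨i, hi, hu⟩ := hx x
        refine ⟨f i, ⟨by simp [P], hi⟩, ?_⟩
        rintro l ⟨hl, hxl⟩
        obtain ⟨j, -, rfl⟩ := Finset.mem_image.1 hl
        rw [hu j hxl]
      · rintro l hl x y hxr hyr hxl hyl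
        obtain ⟨j, -, rfl⟩ := Finset.mem_image.1 hl
        have h1 := (hx x).unique hxl (hr ⟨x, by omega⟩ x rfl hxr)
        have h2 := (hx y).unique hyl (hr ⟨y, by omega⟩ y rfl hyr)
        have := h1.symm.trans h2
        simpa [Fin.ext_iff] using this
    let e : Fin k ≃ {l // l ∈ P} := Equiv.ofBijective
      (fun i => ⟨f i, by simp [P]⟩) ⟨fun i j hij => hinj (congrArg Subtype.val hij), by
        rintro ⟨l, hl⟩
        obtain ⟨j, -, rfl⟩ := Finset.mem_image.1 hl
        exact ⟨j, rfl⟩⟩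
    exact ⟨⟨⟨P, hP⟩, ⟨e, hr⟩⟩, rfl⟩

/-- In a labelled partition, the pairs (label, position) are in bijection with the elements. -/
theorem bijective_get {n s k r : ℕ} {f : Fin k → List (Fin n)} (hf : IsLabelled n s k r f) :
    Function.Bijective (fun p : Σ i, Fin (f i).length => (f p.1).get p.2) := by
  obtain ⟨hf, hx, -⟩ := hf
  constructor
  · rintro ⟨i, a⟩ ⟨j, b⟩ h
    have hij : i = j := (hx _).unique (List.get_mem (f i) a)
      (by have h' : (f i).get a = (f j).get b := h
          rw [h']; exact List.get_mem (f j) b)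
    subst hij
    exact congrArg (Sigma.mk i) ((List.nodup_iff_injective_get.1 (hf i).1) h)
  · intro x
    obtain ⟨i, hi, -⟩ := hx x
    obtain ⟨a, ha⟩ := List.get_of_mem hi
    exact ⟨⟨i, a⟩, ha⟩

/-- With the list lengths `l` fixed, the elements `x < r` have to be placed in list `x`, at any of its
`l x` positions; the other `n - r` elements fill the remaining positions arbitrarily. -/
theorem card_positions {n k r : ℕ} (hrk : r ≤ k) (hrn : r ≤ n) (l : Fin k → ℕ)
    (hl : ∑ i, l i = n) :
    Nat.card {e : Fin n ≃ Σ i, Fin (l i) //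
      ∀ (i : Fin k) (x : Fin n), (i : ℕ) = x → (x : ℕ) < r → (e x).1 = i} =
    (n - r).factorial * ∏ i : Fin k, if (i : ℕ) < r then l i else 1 := by
  let g : (∀ i : {i : Fin k // (i : ℕ) < r}, Fin (l i)) → {x : Fin n // (x : ℕ) < r} →
      Σ i, Fin (l i) := fun q x => ⟨⟨x, by omega⟩, q ⟨⟨x, by omega⟩, x.2⟩⟩
  have hfib : ∀ q, Nat.card {e : Fin n ≃ Σ i, Fin (l i) //
      ∀ (x : Fin n) (hx : (x : ℕ) < r), e x = g q ⟨x, hx⟩} = (n - r).factorial := by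
    intro q
    rw [card_equiv_extending (by simp [hl]) _ (g q), card_val_lt hrn, Nat.card_fin]
    rintro ⟨x, hx⟩ ⟨y, hy⟩ h
    have := congrArg Sigma.fst h
    simpa [g, Fin.ext_iff] using this
  have h1 := card_sigma_const (Nat.factorial_pos _) hfib
  have h2 : Nat.card (∀ i : {i : Fin k // (i : ℕ) < r}, Fin (l i)) =
      ∏ i : Fin k, if (i : ℕ) < r then l i else 1 := by
    rw [Nat.card_pi, ← Finset.prod_filter]
    simp only [Nat.card_fin]
    exact (Finset.prod_subtype _ (by simp) l).symm
  rw [h2, mul_comm] at h1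
  rw [← h1]
  symm
  refine Nat.card_eq_of_bijective (fun Q => ⟨Q.2.1, ?_⟩) ⟨?_, ?_⟩
  · intro i x hix hx
    rw [Q.2.2 x hx]
    exact Fin.ext hix.symm
  · rintro ⟨q, e, he⟩ ⟨q', e', he'⟩ h
    have : e = e' := congrArg Subtype.val h
    subst this
    have : q = q' := by
      funext i
      have := (he ⟨i, by omega⟩ i.2).symm.trans (he' ⟨i, by omega⟩ i.2)
      simpa [g] using this
    subst this
    rfl
  · rintro ⟨e, he⟩
    have : ∀ i : {i : Fin k // (i : ℕ) < r}, ∃ a : Fin (l i), e ⟨i, by omega⟩ = ⟨i, a⟩ := by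
      intro i
      have := he i ⟨i, by omega⟩ rfl i.2
      generalize e ⟨i, by omega⟩ = z at this
      obtain ⟨j, b⟩ := z
      obtain rfl : j = i := this
      exact ⟨b, rfl⟩
    choose q hq using this
    exact ⟨⟨q, e, fun x hx => hq ⟨⟨x, by omega⟩, hx⟩⟩, rfl⟩

theorem card_labelled_lengths {n s k r : ℕ} (hrk : r ≤ k) (hrn : r ≤ n) (l : Fin k → ℕ)
    (hl : ∑ i, l i = n) (hls : ∀ i, s ≤ l i) :
    Nat.card {f : {f // IsLabelled n s k r f} // ∀ i, (f.1 i).length = l i} =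
    (n - r).factorial * ∏ i : Fin k, if (i : ℕ) < r then l i else 1 := by
  rw [← card_positions hrk hrn l hl]
  symm
  have hmem : ∀ (e : Fin n ≃ Σ i, Fin (l i)) (i : Fin k) (x : Fin n),
      x ∈ List.ofFn (fun a => e.symm ⟨i, a⟩) ↔ (e x).1 = i := by
    intro e i x
    rw [List.mem_ofFn]
    constructor
    · rintro ⟨a, rfl⟩
      simp
    · rintro rfl
      exact ⟨(e x).2, by simp⟩
  refine Nat.card_eq_of_bijective
    (fun e => ⟨⟨fun i => List.ofFn (fun a => e.1.symm ⟨i, a⟩), ?_, ?_, ?_⟩, ?_⟩) ⟨?_, ?_⟩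
  · intro i
    refine ⟨List.nodup_ofFn.2 fun a b h => ?_, by simpa using hls i⟩
    simpa using h
  · intro x
    simp only [hmem]
    exact ⟨_, rfl, fun _ h => h.symm⟩
  · intro i x hix hx
    rw [hmem]
    exact e.2 i x hix hx
  · simp
  · rintro ⟨e, he⟩ ⟨e', he'⟩ h
    have h' : ∀ i, (fun a => e.symm ⟨i, a⟩) = (fun a => e'.symm ⟨i, a⟩) := fun i =>
      List.ofFn_injective (congrFun (congrArg (fun z => z.1.1) h) i)
    refine Subtype.ext (Equiv.symm_bijective.1 (Equiv.ext fun p => ?_))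
    exact congrFun (h' p.1) p.2
  · rintro ⟨⟨f, hf⟩, hfl⟩
    obtain rfl : (fun i => (f i).length) = l := funext hfl
    let e := (Equiv.ofBijective _ (bijective_get hf)).symm
    have hfe : ∀ i, List.ofFn (fun a => e.symm ⟨i, a⟩) = f i := fun i => List.ofFn_get (f i)
    refine ⟨⟨e, fun i x hix hx => ?_⟩, ?_⟩
    · rw [← hmem, hfe]
      exact hf.2.2 i x hix hx
    · exact Subtype.ext (Subtype.ext (funext hfe))

/-! ### Generating function of the list lengths -/

/-- Generating function of the admissible lengths `m ≥ s` of one list. Each length is weighted by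
the number of positions for a distinguished element if the list has one (that is, if `w` holds),
and by `1` otherwise. -/
noncomputable def lengthSeries (s : ℕ) (w : Prop) [Decidable w] : PowerSeries ℕ :=
  PowerSeries.mk fun m => if s ≤ m then (if w then m else 1) else 0

theorem card_labelled {n s k r : ℕ} (hrk : r ≤ k) (hrn : r ≤ n) :
    Nat.card {f // IsLabelled n s k r f} = (n - r).factorial *
      PowerSeries.coeff n (∏ i : Fin k, lengthSeries s ((i : ℕ) < r)) := by
  classical
  rw [PowerSeries.coeff_prod, Finset.mul_sum]
  let T := Finset.finsuppAntidiag (Finset.univ : Finset (Fin k)) n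
  let len : {f // IsLabelled n s k r f} → T := fun f =>
    ⟨Finsupp.equivFunOnFinite.symm fun i => (f.1 i).length, by
      have := Fintype.card_of_bijective (bijective_get f.2)
      simpa [T, Finset.mem_finsuppAntidiag] using this⟩
  have hlen : ∀ l : T, Nat.card {f // len f = l} = (n - r).factorial *
      ∏ i, PowerSeries.coeff (l.1 i) (lengthSeries s ((i : ℕ) < r)) := by
    rintro ⟨l, hl⟩
    have hl' : ∑ i, l i = n := by simpa [T, Finset.mem_finsuppAntidiag] using hl
    have e : Nat.card {f // len f = ⟨l, hl⟩} =
        Nat.card {f : {f // IsLabelled n s k r f} // ∀ i, (f.1 i).length = l i} :=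
      Nat.card_congr (Equiv.subtypeEquivRight fun f => by
        simp [len, Finsupp.ext_iff])
    rw [e]
    by_cases hls : ∀ i, s ≤ l i
    · rw [card_labelled_lengths hrk hrn l hl' hls]
      simp [lengthSeries, hls]
    · push Not at hls
      obtain ⟨i, hi⟩ := hls
      have : IsEmpty {f : {f // IsLabelled n s k r f} // ∀ i, (f.1 i).length = l i} := by
        refine ⟨fun f => ?_⟩
        have h1 := f.2 i
        have h2 := (f.1.2.1 i).2
        omega
      rw [Nat.card_of_isEmpty, Finset.prod_eq_zero (Finset.mem_univ i), mul_zero]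
      simp [lengthSeries, hi]
  have hfin : Finite {f // IsLabelled n s k r f} := by
    have hb : ∀ f : {f // IsLabelled n s k r f}, ∀ i, (f.1 i).length < n + 1 := fun f i => by
      have := (f.2.1 i).1.length_le_card
      simp at this
      omega
    have : Finite {l : List (Fin n) // l.length < n + 1} := List.finite_length_lt (Fin n) (n + 1)
    refine Finite.of_injective (β := Fin k → {l : List (Fin n) // l.length < n + 1})
      (fun f i => ⟨f.1 i, hb f i⟩) fun f g h => Subtype.ext (funext fun i => ?_)
    exact congrArg Subtype.val (congrFun h i)
  rw [← Nat.card_congr (Equiv.sigmaFiberEquiv len), Nat.card_sigma, Finset.sum_congr rfl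
    fun l _ => hlen l]
  exact Finset.sum_coe_sort T fun l => (n - r).factorial *
      ∏ i, PowerSeries.coeff (l i) (lengthSeries s ((i : ℕ) < r))

open PowerSeries in
/-- `PowerSeries.mk_one_pow_eq_mk_choose_add` over the semiring `ℕ`, descended from `ℤ`. -/
theorem mk_one_pow_nat (d : ℕ) :
    (mk 1 : PowerSeries ℕ) ^ (d + 1) = mk fun n => Nat.choose (d + n) d := by
  have h : map (Nat.castRingHom ℤ) (mk 1) = mk 1 := by ext; simp
  ext m
  have := congrArg (coeff m) (mk_one_pow_eq_mk_choose_add ℤ d)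
  rw [← h, ← map_pow, coeff_map, coeff_mk] at this
  simpa using this

open PowerSeries in
theorem lengthSeries_of_not {w : Prop} [Decidable w] (hw : ¬w) (s : ℕ) :
    lengthSeries s w = X ^ s * (mk 1) := by
  ext m
  simp [lengthSeries, coeff_X_pow_mul', hw]

open PowerSeries in
/-- With a distinguished element the weight is `m = (m - s + 1) + (s - 1)`, whence the two summands
`x ^ s / (1 - x) ^ 2` and `(s - 1) x ^ s / (1 - x)`. -/
theorem lengthSeries_of_pos {w : Prop} [Decidable w] (hw : w) {s : ℕ} (hs : 1 ≤ s) :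
    lengthSeries s w = X ^ s * (mk 1) * (mk 1 + C (s - 1)) := by
  have h2 : (mk 1 : PowerSeries ℕ) ^ 2 = _ := mk_one_pow_nat 1
  rw [mul_assoc, mul_add, ← pow_two, h2]
  ext m
  simp only [lengthSeries, coeff_X_pow_mul', map_add, coeff_mul_C, coeff_mk, hw]
  split_ifs
  · simp
    omega
  · simp

open PowerSeries in
theorem coeff_prod_lengthSeries {n s k r : ℕ} (hs : 1 ≤ s) (hk : 1 ≤ k) (hrk : r ≤ k)
    (hn : s * k ≤ n) :
    coeff n (∏ i : Fin k, lengthSeries s ((i : ℕ) < r)) =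
      ∑ j ∈ Finset.range (r + 1),
        Nat.choose r j * Nat.choose (n + j - (s - 1) * k - 1) (k + j - 1) * (s - 1) ^ (r - j) := by
  have h1 : ∏ i : Fin k, lengthSeries s ((i : ℕ) < r) =
      ∏ i : Fin k, (X ^ s * (mk 1)) * (if (i : ℕ) < r then (mk 1 + C (s - 1)) else 1) := by
    refine Finset.prod_congr rfl fun i _ => ?_
    by_cases hi : (i : ℕ) < r
    · rw [lengthSeries_of_pos hi hs, if_pos hi]
    · rw [lengthSeries_of_not hi, if_neg hi, mul_one]
  have hcard : (Finset.univ.filter fun i : Fin k => (i : ℕ) < r).card = r := by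
    rw [← Fintype.card_subtype, ← Nat.card_eq_fintype_card, card_val_lt hrk]
  rw [h1, Finset.prod_mul_distrib, ← Finset.prod_filter, Finset.prod_const, Finset.prod_const,
    hcard, Finset.card_univ, Fintype.card_fin, add_pow, mul_pow, ← pow_mul, mul_assoc,
    coeff_X_pow_mul', if_pos hn, Finset.mul_sum, map_sum]
  refine Finset.sum_congr rfl fun j _ => ?_
  have h3 : (mk 1 : PowerSeries ℕ) ^ k * (mk 1 ^ j * C (s - 1) ^ (r - j) * (r.choose j : ℕ⟦X⟧)) =
      mk 1 ^ (k + j - 1 + 1) * C ((s - 1) ^ (r - j) * r.choose j) := by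
    rw [show k + j - 1 + 1 = k + j by omega, map_mul, map_pow, pow_add]
    simp only [← map_natCast (C (R := ℕ)), Nat.cast_id]
    ring
  have h4 : n + j - (s - 1) * k - 1 = k + j - 1 + (n - s * k) := by
    obtain ⟨t, rfl⟩ : ∃ t, s = t + 1 := ⟨s - 1, by omega⟩
    have : (t + 1) * k = t * k + k := by ring
    simp only [Nat.add_sub_cancel]
    omega
  rw [h3, mk_one_pow_nat, coeff_mul_C, coeff_mk, h4]
  ring

theorem card_r_list_partitions (n s k r : ℕ) (hs : 1 ≤ s) (hk : 1 ≤ k) (hrk : r ≤ k)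
    (hn : s * k ≤ n) :
    Nat.card {P : Finset (List (Fin n)) // IsRListPartition n s k r P} * (k - r).factorial
      = (n - r).factorial *
          ∑ j ∈ Finset.range (r + 1),
            Nat.choose r j * Nat.choose (n + j - (s - 1) * k - 1) (k + j - 1)
              * (s - 1) ^ (r - j) := by
  have hrn : r ≤ n := hrk.trans ((Nat.le_mul_of_pos_left k hs).trans hn)
  rw [← card_labelled_eq_mul n s k r hs hrk hrn, card_labelled hrk hrn,
    coeff_prod_lengthSeries hs hk hrk hn]
end

section
/- Let s ≥ 2, k, r and n be integers with 1 ≤ r ≤ k and n ≥ s·k. Then L_r^(s)(n,k) = C(n−r−1, s−1)·s!·L_r^(s)(n−s, k−1) + r·C(n−r−1, s−2)·s!·L_{r−1}^(s)(n−s, k−1) + (n+k−1)·L_r^(s)(n−1, k). -/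
/-!
Write `n = s * k + m` and `d = s - 1`. Up to the factor `(n - r)! / (k - r)!`, the number
`L_r^(s)(n,k)` is the coefficient `A_r(k,m)` of `x ^ m` in `(1 - x)⁻ᵏ * (d + (1 - x)⁻¹) ^ r`
(`factorial_mul_assocRLah`). After cancelling the factorials, the recurrence becomes the
relation
`(n - r) A_r(k,m) = s (k - r) A_r(k-1,m) + r s d A_{r-1}(k-1,m) + (n + k - 1) A_r(k,m-1)`.
It is proved in `lahCoeff_rec` by induction on `r`, for all `k` simultaneously, from the two
relations expressing multiplication of the series by `d + (1 - x)⁻¹` (`lahCoeff_succ`) and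
by `1 - x` (`lahCoeff_pascal`). For `m = 0` the last term is absent and `A_r(k,0) = s ^ r`.
-/

/-- The `s`-associated `r`-Lah number `L_r^(s)(n,k)`. -/
def assocRLah (s r n k : ℕ) : ℕ :=
  if k = 0 then (if n = 0 ∧ r = 0 then 1 else 0)
  else if n < s * k ∨ k < r then 0
  else ((n - r).factorial / (k - r).factorial) *
    ∑ j ∈ Finset.range (r + 1),
      Nat.choose r j * Nat.choose (n + j - (s - 1) * k - 1) (k + j - 1) * (s - 1) ^ (r - j)

/-- The coefficient of `x ^ m` in `(1 - x)⁻ᵏ * (d + (1 - x)⁻¹) ^ r`. Here `multichoose k m` is the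
coefficient of `x ^ m` in `(1 - x)⁻ᵏ`, including the case `k = 0`. -/
def lahCoeff (d r k m : ℕ) : ℕ :=
  ∑ j ∈ Finset.range (r + 1), r.choose j * (Nat.multichoose (k + j) m * d ^ (r - j))

theorem lahCoeff_zero (d k m : ℕ) : lahCoeff d 0 k m = Nat.multichoose k m := by
  simp [lahCoeff]

theorem lahCoeff_succ (d r k m : ℕ) :
    lahCoeff d (r + 1) k m = d * lahCoeff d r k m + lahCoeff d r (k + 1) m := by
  unfold lahCoeff
  have h := Finset.sum_choose_succ_mul (R := ℕ)
    (fun i l => Nat.multichoose (k + i) m * d ^ l) r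
  simp only [Nat.cast_id] at h
  rw [h, Finset.mul_sum]
  congr 1
  · refine Finset.sum_congr rfl fun i hi => ?_
    have : r + 1 - i = (r - i) + 1 := by have := Finset.mem_range.1 hi; omega
    rw [this, pow_succ]; ring
  · refine Finset.sum_congr rfl fun i _ => ?_
    rw [show k + (i + 1) = k + 1 + i by ring]

theorem lahCoeff_pascal (d r k m : ℕ) :
    lahCoeff d r (k + 1) (m + 1) = lahCoeff d r k (m + 1) + lahCoeff d r (k + 1) m := by
  induction r generalizing k with
  | zero => simp only [lahCoeff_zero, Nat.multichoose_succ_succ]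
  | succ r ih => simp only [lahCoeff_succ, ih]; ring

theorem lahCoeff_at_zero (d r k : ℕ) : lahCoeff d r k 0 = (d + 1) ^ r := by
  induction r generalizing k with
  | zero => simp [lahCoeff_zero]
  | succ r ih => simp only [lahCoeff_succ, ih]; ring

/-- The case `r = 0` of `lahCoeff_rec` reduces to this identity, the coefficient form of
the differential equation `(1 - x) * (df/dx) = k * f` for `f = (1 - x)⁻ᵏ`. -/
theorem succ_mul_multichoose (k m : ℕ) :
    (m + 1) * Nat.multichoose k (m + 1) = (k + m) * Nat.multichoose k m := by
  rcases k with _ | k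
  · rcases m with _ | m <;> simp
  · simp only [Nat.multichoose_eq]
    have := Nat.add_one_mul_choose_eq (k + m) m
    rw [show k + 1 + (m + 1) - 1 = k + m + 1 by omega, show k + 1 + m - 1 = k + m by omega]
    linarith

/-- The cancelled recurrence in degree `m + 1`. When `r = 0` the term with index `r - 1` has
coefficient `0`. -/
theorem lahCoeff_rec (d r k m : ℕ) :
    (((d + 1) * (k + 1) + (m + 1) - r : ℤ)) * lahCoeff d r (k + 1) (m + 1)
      = (d + 1) * (k + 1 - r) * lahCoeff d r k (m + 1)
        + r * (d + 1) * d * lahCoeff d (r - 1) k (m + 1)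
        + ((d + 1) * (k + 1) + m + k + 1) * lahCoeff d r (k + 1) m := by
  induction r generalizing k with
  | zero =>
    have h1 : (lahCoeff d 0 (k + 1) (m + 1) : ℤ)
        = lahCoeff d 0 k (m + 1) + lahCoeff d 0 (k + 1) m := by
      exact_mod_cast lahCoeff_pascal d 0 k m
    have h2 : ((m + 1 : ℤ)) * lahCoeff d 0 (k + 1) (m + 1)
        = (k + 1 + m) * lahCoeff d 0 (k + 1) m := by
      simp only [lahCoeff_zero]
      exact_mod_cast succ_mul_multichoose (k + 1) m
    push_cast
    linear_combination h2 + ((d : ℤ) + 1) * (k + 1) * h1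
  | succ r ih =>
    have e1 := ih k
    have e2 := ih (k + 1)
    have p : (lahCoeff d r (k + 2) (m + 1) : ℤ)
        = lahCoeff d r (k + 1) (m + 1) + lahCoeff d r (k + 2) m := by
      exact_mod_cast lahCoeff_pascal d r (k + 1) m
    have q : (r : ℤ) * lahCoeff d r k (m + 1)
        = r * (d * lahCoeff d (r - 1) k (m + 1) + lahCoeff d (r - 1) (k + 1) (m + 1)) := by
      rcases r with _ | r
      · simp
      · rw [Nat.add_sub_cancel, lahCoeff_succ]; push_cast; ring
    rw [Nat.add_sub_cancel, lahCoeff_succ, lahCoeff_succ, lahCoeff_succ]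
    push_cast at e1 e2 ⊢
    linear_combination (d : ℤ) * e1 + e2 - ((d : ℤ) + 1) * d * q - ((d : ℤ) + 2) * p

theorem factorial_mul_assocRLah (d r k m : ℕ) (h : r ≤ k) :
    (k - r).factorial * assocRLah (d + 1) r ((d + 1) * k + m) k
      = ((d + 1) * k + m - r).factorial * lahCoeff d r k m := by
  unfold assocRLah
  rcases k with _ | k
  · obtain rfl : r = 0 := by omega
    rcases m with _ | m <;> simp [lahCoeff_zero]
  · have hle : k + 1 ≤ (d + 1) * (k + 1) + m := by nlinarith [Nat.zero_le (d * (k + 1))]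
    rw [if_neg (by omega), if_neg (by rintro (h' | h') <;> omega), ← mul_assoc,
      Nat.mul_div_cancel' (Nat.factorial_dvd_factorial (by omega))]
    congr 1
    unfold lahCoeff
    refine Finset.sum_congr rfl fun j _ => ?_
    have e : (d + 1) * (k + 1) + m + j - (d + 1 - 1) * (k + 1) - 1 = k + j + m := by
      have : (d + 1) * (k + 1) = d * (k + 1) + (k + 1) := by ring
      rw [Nat.add_sub_cancel]; omega
    rw [e, Nat.multichoose_eq, show k + 1 + j + m - 1 = k + j + m by omega,
      show k + 1 + j - 1 = k + j by omega, Nat.choose_symm_add, mul_assoc, Nat.add_sub_cancel]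

/-- A version of `factorial_mul_assocRLah` that also covers `r = k + 1`, where both sides vanish. -/
theorem factorial_mul_assocRLah' (d r k m : ℕ) (h : r ≤ k + 1) :
    (k + 1 - r).factorial * assocRLah (d + 1) r ((d + 1) * k + m) k
      = (k + 1 - r) * (((d + 1) * k + m - r).factorial * lahCoeff d r k m) := by
  rcases Nat.lt_or_ge k r with h' | h'
  · obtain rfl : r = k + 1 := by omega
    rcases k with _ | k <;> simp [assocRLah]
  · rw [← factorial_mul_assocRLah d r k m h', Nat.sub_add_comm h', Nat.factorial_succ, mul_assoc]

theorem assocRLah_triangular_rec (s r n k : ℕ) (hs : 2 ≤ s) (hr : 1 ≤ r) (hrk : r ≤ k)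
    (hn : s * k ≤ n) :
    assocRLah s r n k
      = Nat.choose (n - r - 1) (s - 1) * s.factorial * assocRLah s r (n - s) (k - 1)
        + r * Nat.choose (n - r - 1) (s - 2) * s.factorial * assocRLah s (r - 1) (n - s) (k - 1)
        + (n + k - 1) * assocRLah s r (n - 1) k := by
  obtain ⟨m, rfl⟩ := Nat.exists_eq_add_of_le hn
  obtain ⟨e, rfl⟩ := Nat.exists_eq_add_of_le' hs
  obtain ⟨R, rfl⟩ := Nat.exists_eq_add_of_le' hr
  obtain ⟨t, rfl⟩ := Nat.exists_eq_add_of_le hrk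
  -- `N` is `n - r - 1`, written without subtraction.
  obtain ⟨N, hN⟩ : ∃ N, N = e * (R + 1) + R + (e + 2) * t + m := ⟨_, rfl⟩
  have hn' : (e + 2) * (R + 1 + t) + m = N + R + 2 := by rw [hN]; ring
  have hns : (e + 2) * (R + 1 + t) + m - (e + 2) = (e + 2) * (R + t) + m := by
    rw [show (e + 2) * (R + 1 + t) + m = (e + 2) * (R + t) + m + (e + 2) by ring,
      Nat.add_sub_cancel]
  have hns' : (e + 2) * (R + t) + m + e = N + R := by
    have : (e + 2) * (R + 1 + t) + m = (e + 2) * (R + t) + m + (e + 2) := by ring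
    omega
  have heN : e ≤ N := by rw [hN]; nlinarith [Nat.zero_le (e * R), Nat.zero_le ((e + 2) * t)]
  have h1 := factorial_mul_assocRLah (e + 1) (R + 1) (R + 1 + t) m (by omega)
  have h2 := factorial_mul_assocRLah' (e + 1) (R + 1) (R + t) m (by omega)
  have h3 := factorial_mul_assocRLah (e + 1) R (R + t) m (by omega)
  have c2 : N.choose e * (e + 2).factorial * ((e + 2) * (R + t) + m - R).factorial
      = (e + 2) * (e + 1) * N.factorial := by
    rw [show (e + 2) * (R + t) + m - R = N - e by omega,
      ← Nat.choose_mul_factorial_mul_factorial heN, Nat.factorial_succ, Nat.factorial_succ]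
    ring
  have c1 : t * (N.choose (e + 1) * (e + 2).factorial
      * ((e + 2) * (R + t) + m - (R + 1)).factorial) = t * ((e + 2) * N.factorial) := by
    rcases Nat.eq_zero_or_pos t with rfl | ht
    · simp
    · have heN' : e + 1 ≤ N := by
        rw [hN]; nlinarith [Nat.zero_le (e * R), Nat.zero_le (e * (t - 1)), Nat.zero_le (e * t)]
      rw [show (e + 2) * (R + t) + m - (R + 1) = N - (e + 1) by omega,
        ← Nat.choose_mul_factorial_mul_factorial heN', Nat.factorial_succ (e + 1)]
      ring
  rw [show e + 1 + 1 = e + 2 by ring] at h1 h2 h3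
  rw [show R + 1 + t - (R + 1) = t by omega,
    show (e + 2) * (R + 1 + t) + m - (R + 1) = N + 1 by omega, Nat.factorial_succ] at h1
  rw [show R + t + 1 - (R + 1) = t by omega] at h2
  rw [show R + t - R = t by omega] at h3
  rw [hns, show R + 1 + t - 1 = R + t by omega, Nat.add_sub_cancel,
    show (e + 2) * (R + 1 + t) + m - (R + 1) - 1 = N by omega,
    show e + 2 - 1 = e + 1 by omega, Nat.add_sub_cancel]
  refine Nat.eq_of_mul_eq_mul_left (Nat.factorial_pos t) ?_
  rw [h1]
  have hk : R + 1 + t = R + t + 1 := by ring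
  rcases m with _ | m
  · have h4 : assocRLah (e + 2) (R + 1) ((e + 2) * (R + 1 + t) + 0 - 1) (R + 1 + t) = 0 := by
      unfold assocRLah
      rw [if_neg (by omega), if_pos (Or.inl (by omega))]
    rw [h4]
    simp only [lahCoeff_at_zero] at *
    zify at *
    linear_combination (-((N.choose (e + 1) : ℤ) * (e + 2).factorial)) * h2
      - ((R : ℤ) + 1) * (N.choose e * (e + 2).factorial) * h3
      - ((e : ℤ) + 1 + 1) ^ (R + 1) * c1 - ((R : ℤ) + 1) * ((e : ℤ) + 1 + 1) ^ R * c2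
      + (N.factorial : ℤ) * ((e : ℤ) + 1 + 1) ^ (R + 1) * hN
  · have h4 := factorial_mul_assocRLah (e + 1) (R + 1) (R + 1 + t) m (by omega)
    rw [show e + 1 + 1 = e + 2 by ring, show R + 1 + t - (R + 1) = t by omega,
      show (e + 2) * (R + 1 + t) + m - (R + 1) = N by omega] at h4
    have h5 := lahCoeff_rec (e + 1) (R + 1) (R + t) m
    rw [Nat.add_sub_cancel, ← hk] at h5
    rw [show (e + 2) * (R + 1 + t) + (m + 1) - 1 = (e + 2) * (R + 1 + t) + m by omega,
      show (e + 2) * (R + 1 + t) + (m + 1) + (R + 1 + t) - 1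
        = (e + 2) * (R + 1 + t) + m + (R + 1 + t) by omega]
    zify at *
    linear_combination (-((N.choose (e + 1) : ℤ) * (e + 2).factorial)) * h2
      - ((R : ℤ) + 1) * (N.choose e * (e + 2).factorial) * h3
      - (((e : ℤ) + 2) * (R + 1 + t) + m + (R + 1 + t)) * h4
      - (lahCoeff (e + 1) (R + 1) (R + t) (m + 1) : ℤ) * c1
      - ((R : ℤ) + 1) * (lahCoeff (e + 1) R (R + t) (m + 1) : ℤ) * c2
      + (N.factorial : ℤ) * h5
      + (N.factorial : ℤ) * (lahCoeff (e + 1) (R + 1) (R + 1 + t) (m + 1) : ℤ) * hN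
end

section
/- Let s ≥ 1 and p ≥ 1 be integers, let k_1,…,k_p and r_1,…,r_p be nonnegative integers, and set k = k_1+⋯+k_p and r = r_1+⋯+r_p. Then for every integer n ≥ 0, (k!/(k_1!·k_2!⋯k_p!))·L_r^(s)(n+r, k+r) = ∑ (n!/(l_1!·l_2!⋯l_p!))·∏_{i=1}^{p} L_{r_i}^(s)(l_i+r_i, k_i+r_i), where the sum ranges over all p-tuples (l_1,…,l_p) of nonnegative integers with l_1+⋯+l_p = n. -/
namespace AssocRLah

open PowerSeries

/-- The exponential generating function `X ^ s / (1 - X)` of ordered lists with at least `s`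
elements, with `1 / (1 - X)` written as the series all of whose coefficients are `1`. -/
noncomputable def listSeries (s : ℕ) : ℚ⟦X⟧ := X ^ s * mk 1

/-- The derivative of `listSeries s` for `s ≥ 1`, in the form
`X ^ (s - 1) * (1 / (1 - X) ^ 2 + (s - 1) / (1 - X))`: the generating function of lists that
carry one distinguished element besides those counted by the exponent. -/
noncomputable def markedListSeries (s : ℕ) : ℚ⟦X⟧ :=
  X ^ (s - 1) * (mk 1 ^ 2 + C ((s - 1 : ℕ) : ℚ) * mk 1)

/-- The Cauchy product of `p` power series, indexed by tuples. -/
lemma coeff_prod_univ_fin (p n : ℕ) (f : Fin p → ℚ⟦X⟧) :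
    coeff n (∏ i, f i) =
      ∑ l ∈ Finset.Nat.antidiagonalTuple p n, ∏ i, coeff (l i) (f i) := by
  rw [coeff_prod]
  refine Finset.sum_bij' (fun l _ => (l : Fin p → ℕ)) (fun l _ => Finsupp.equivFunOnFinite.symm l)
    ?_ ?_ ?_ ?_ ?_
  · intro l hl
    simpa [Finset.Nat.mem_antidiagonalTuple] using hl
  · intro l hl
    simpa [Finset.Nat.mem_antidiagonalTuple] using hl
  · intro l hl
    ext i; simp
  · intro l hl
    simp
  · intro l hl
    rfl

/-- The coefficients of `X ^ a / (1 - X) ^ (m + 1)`. -/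
lemma coeff_X_pow_mul_geom (a m n : ℕ) :
    coeff n (X ^ a * (mk 1 : ℚ⟦X⟧) ^ (m + 1)) =
      if a ≤ n then ((m + (n - a)).choose m : ℚ) else 0 := by
  rw [coeff_X_pow_mul', mk_one_pow_eq_mk_choose_add, coeff_mk]

/-- The binomial expansion of `listSeries ^ k * markedListSeries ^ r`, for `s = t + 1`. -/
lemma listSeries_pow_mul (t k r : ℕ) :
    listSeries (t + 1) ^ k * markedListSeries (t + 1) ^ r =
      ∑ j ∈ Finset.range (r + 1), C ((r.choose j * t ^ (r - j) : ℕ) : ℚ) *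
        (X ^ ((t + 1) * k + t * r) * mk 1 ^ (k + r + j)) := by
  rw [markedListSeries, listSeries, mul_pow _ _ r, add_pow, Finset.mul_sum, Finset.mul_sum]
  refine Finset.sum_congr rfl fun j hj => ?_
  obtain ⟨d, rfl⟩ := Nat.exists_eq_add_of_le (Nat.lt_succ_iff.mp (Finset.mem_range.mp hj))
  simp only [Nat.add_sub_cancel, Nat.add_sub_cancel_left, Nat.cast_mul, Nat.cast_pow, map_mul,
    map_pow, map_natCast]
  ring

/-- `L_r^(s)(n + r, k + r) / n!` is the coefficient of `X ^ n` in
`listSeries s ^ k * markedListSeries s ^ r / k!`. -/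
lemma factorial_mul_coeff (s : ℕ) (hs : 1 ≤ s) (k r n : ℕ) :
    (n.factorial : ℚ) * coeff n (listSeries s ^ k * markedListSeries s ^ r) =
      k.factorial * assocRLah s r (n + r) (k + r) := by
  obtain ⟨t, rfl⟩ := Nat.exists_eq_add_of_le' hs
  rcases Nat.eq_zero_or_pos (k + r) with h0 | hpos
  · obtain ⟨rfl, rfl⟩ : k = 0 ∧ r = 0 := by omega
    by_cases hn : n = 0 <;> simp [assocRLah, coeff_one, hn]
  rw [listSeries_pow_mul, map_sum]
  obtain ⟨m, hm⟩ : ∃ m, k + r = m + 1 := ⟨k + r - 1, by omega⟩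
  have hcoeff : ∀ j, coeff n (C ((r.choose j * t ^ (r - j) : ℕ) : ℚ) *
      (X ^ ((t + 1) * k + t * r) * mk 1 ^ (k + r + j))) =
      ((r.choose j * t ^ (r - j) : ℕ) : ℚ) * if (t + 1) * k + t * r ≤ n then
        ((m + j + (n - ((t + 1) * k + t * r))).choose (m + j) : ℚ) else 0 := by
    intro j
    rw [coeff_C_mul, show k + r + j = m + j + 1 by omega, coeff_X_pow_mul_geom]
  simp_rw [hcoeff]
  have hexp : (t + 1) * (k + r) = (t + 1) * k + t * r + r := by ring
  rw [assocRLah, if_neg hpos.ne']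
  by_cases hn : (t + 1) * k + t * r ≤ n
  · have hkn : k ≤ n := by nlinarith
    rw [if_neg (by omega), Nat.add_sub_cancel, Nat.add_sub_cancel, Nat.cast_mul,
      -- the natural-number quotient `n! / k!` is exact because `k ≤ n`
      Nat.cast_div (Nat.factorial_dvd_factorial hkn) (by positivity), ← mul_assoc,
      mul_div_cancel₀ _ (by positivity), Nat.cast_sum]
    congr 1
    refine Finset.sum_congr rfl fun j _ => ?_
    have hexp' : t * (k + r) + k = (t + 1) * k + t * r := by ring
    rw [if_pos hn, Nat.add_sub_cancel,
      show n + r + j - t * (k + r) - 1 = m + j + (n - ((t + 1) * k + t * r)) by omega,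
      show k + r + j - 1 = m + j by omega]
    push_cast
    ring
  · rw [if_pos (by omega)]
    simp [hn]

end AssocRLah

theorem assocRLah_convolution (s p : ℕ) (hs : 1 ≤ s) (hp : 1 ≤ p)
    (kf rf : Fin p → ℕ) (n : ℕ) :
    ((∑ i, kf i).factorial : ℚ) / (∏ i, (kf i).factorial) *
        assocRLah s (∑ i, rf i) (n + ∑ i, rf i) ((∑ i, kf i) + ∑ i, rf i)
      = ∑ l ∈ Finset.Nat.antidiagonalTuple p n,
          (n.factorial : ℚ) / (∏ i, (l i).factorial) *
            ∏ i, (assocRLah s (rf i) (l i + rf i) (kf i + rf i) : ℚ) := by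

  have hL : ∀ k r m : ℕ, (assocRLah s r (m + r) (k + r) : ℚ) = m.factorial / k.factorial *
      PowerSeries.coeff m (AssocRLah.listSeries s ^ k * AssocRLah.markedListSeries s ^ r) := by
    intro k r m
    rw [div_mul_eq_mul_div, AssocRLah.factorial_mul_coeff s hs,
      mul_div_cancel_left₀ _ (by positivity)]
  simp_rw [hL]
  rw [← Finset.prod_pow_eq_pow_sum, ← Finset.prod_pow_eq_pow_sum, ← Finset.prod_mul_distrib,
    AssocRLah.coeff_prod_univ_fin, Finset.mul_sum, Finset.mul_sum]
  refine Finset.sum_congr rfl fun l _ => ?_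
  have hk : (∏ i, ((kf i).factorial : ℚ)) ≠ 0 := Finset.prod_ne_zero_iff.mpr fun i _ => by positivity
  have hl : (∏ i, ((l i).factorial : ℚ)) ≠ 0 := Finset.prod_ne_zero_iff.mpr fun i _ => by positivity
  rw [Finset.prod_mul_distrib, Finset.prod_div_distrib]
  push_cast
  field_simp
end

section
/- Let s ≥ 1, k ≥ 1, r and n be integers with 0 ≤ r ≤ k and n ≥ s·k. Let N be the number of partitions of the set {1,…,n} into k subsets, each subset of cardinality at least s, such that the elements 1,…,r lie in distinct subsets. Then, as rational numbers, N = ((n−r)!/(k−r)!)·∑ 1/((i_1+s−1)!·(i_2+s−1)!⋯(i_r+s−1)!·(i_{r+1}+s)!·(i_{r+2}+s)!⋯(i_k+s)!), where the sum ranges over all compositions (i_1,…,i_k) of n − s·k into k parts. -/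
/-!
The blocks of an `r`-set partition are labelled by `Fin k`, the block of `x < r` receiving the label
`x`. The remaining `k - r` blocks can be labelled freely, so every partition has exactly `(k - r)!`
labellings (`card_labelling`). A labelling amounts to a function on the last `n - r` elements whose
fibre over `j` has at least `s - 1` elements if `j < r` and at least `s` elements otherwise
(`card_labelling_eq`). Sorting these functions by fibre sizes and counting each class by a multinomial
coefficient (`card_prescribed_fibers`, `card_min_fibers`) produces the factor `(n - r)!` and the sum
over compositions.
-/

/-- A partition of `{1,…,n}` (modeled as `Fin n`) into `k` subsets, each of
cardinality at least `s`, such that the `r` first elements (those with value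
`< r`) lie in distinct subsets. -/
def IsRSetPartition (n s k r : ℕ) (P : Finpartition (Finset.univ : Finset (Fin n))) : Prop :=
  P.parts.card = k ∧ (∀ t ∈ P.parts, s ≤ t.card) ∧
    ∀ t ∈ P.parts, ∀ x y : Fin n, (x : ℕ) < r → (y : ℕ) < r → x ∈ t → y ∈ t → x = y

section

open Finset

/-! ### Functions with prescribed fibre sizes -/

/-- Words of length `m` in which each letter `j` occurs exactly `c j` times are counted by a
multinomial coefficient: both sides are the coefficient of `∏ j, X j ^ c j` in `(∑ j, X j) ^ m`. -/
theorem card_prescribed_fibers {m k : ℕ} (c : Fin k → ℕ) (hc : ∑ j, c j = m) :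
    #{g : Fin m → Fin k | ∀ j, #{a | g a = j} = c j} = Nat.multinomial univ c := by
  have h := MvPolynomial.coeff_sum_X_pow_of_fintype (R := ℕ) (Finsupp.equivFunOnFinite.symm c) m
  rw [Finsupp.sum_fintype _ _ (fun _ => rfl)] at h
  rw [Fintype.sum_pow, MvPolynomial.coeff_sum] at h
  -- Each word `p` contributes the monomial of its letter counts.
  have hX (p : Fin m → Fin k) : (∏ i, MvPolynomial.X (p i) : MvPolynomial (Fin k) ℕ) =
      MvPolynomial.monomial (∑ i, Finsupp.single (p i) 1) 1 := by
    rw [MvPolynomial.monomial_sum_one]; rfl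
  simp only [hX, MvPolynomial.coeff_monomial, Finsupp.equivFunOnFinite_symm_apply_apply, hc,
    if_true, Nat.cast_id] at h
  rw [Finsupp.multinomial_eq_of_support_subset (subset_univ _)] at h
  refine (card_filter _ _).trans (Eq.trans (sum_congr rfl fun p _ => ?_) h)
  simp [Finsupp.ext_iff, Finsupp.finsetSum_apply, Finsupp.single_apply]

/-- Functions with lower bounds `c j` on the sizes of their fibres, sorted by the excesses of the
fibre sizes over these bounds; the excesses form a composition of `N = m - ∑ j, c j`. -/
theorem card_min_fibers {m k N : ℕ} (c : Fin k → ℕ) (hc : N + ∑ j, c j = m) :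
    (#{g : Fin m → Fin k | ∀ j, c j ≤ #{a | g a = j}} : ℚ) =
      (m.factorial : ℚ) * ∑ i ∈ Nat.antidiagonalTuple k N,
        ∏ j, (1 : ℚ) / ((i j + c j).factorial : ℚ) := by
  have hsum (g : Fin m → Fin k) : ∑ j, #{a | g a = j} = m := by
    have := card_eq_sum_card_fiberwise (f := g) (s := univ) (t := univ) (by simp)
    simpa using this.symm
  rw [card_eq_sum_card_fiberwise (f := fun g j => #{a | g a = j} - c j)
    (t := Nat.antidiagonalTuple k N)]
  · rw [Nat.cast_sum, mul_sum]
    refine sum_congr rfl fun i hi => ?_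
    rw [Nat.mem_antidiagonalTuple] at hi
    have hic : ∑ j, (i j + c j) = m := by rw [sum_add_distrib, hi, hc]
    have hset : ({g ∈ ({g : Fin m → Fin k | ∀ j, c j ≤ #{a | g a = j}} : Finset _) |
        (fun j => #{a | g a = j} - c j) = i}) =
        ({g : Fin m → Fin k | ∀ j, #{a | g a = j} = i j + c j} : Finset _) := by
      ext g
      simp only [mem_filter, mem_univ, true_and, funext_iff, ← forall_and]
      exact forall_congr' fun j => by omega
    rw [hset, card_prescribed_fibers _ hic]
    have hm := Nat.multinomial_spec univ (fun j => i j + c j)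
    rw [hic] at hm
    rw [← hm, prod_div_distrib]
    have : (∏ j, ((i j + c j).factorial : ℚ)) ≠ 0 :=
      prod_ne_zero_iff.2 fun j _ => by positivity
    push_cast
    field_simp
    simp
  · intro g hg
    have hg' : ∀ j, c j ≤ #{a | g a = j} := by simpa using hg
    simp only [mem_coe, Nat.mem_antidiagonalTuple]
    rw [sum_tsub_distrib _ fun j _ => hg' j, hsum]
    omega

/-! ### Labellings of `r`-set partitions -/

/-- A labelled `r`-set partition: the block labelled `j` is the fibre of `f` over `j`, it has at
least `s` elements, and each of the first `r` elements lies in the block labelled by its own value. -/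
def IsLabelling (n s k r : ℕ) (f : Fin n → Fin k) : Prop :=
  (∀ j, s ≤ #{a | f a = j}) ∧ ∀ x : Fin n, (x : ℕ) < r → (f x : ℕ) = x

/-- The blocks of an `r`-set partition can be labelled: label a block containing some `x < r` by
`x`, which is unambiguous since these elements lie in distinct blocks, and extend this to a bijection
between labels and blocks. -/
theorem exists_labelling {n s k r : ℕ} (hrk : r ≤ k) (hkn : k ≤ n) (P : Finpartition (univ : Finset (Fin n)))
    (hP : IsRSetPartition n s k r P) :
    ∃ f : Fin n → Fin k, IsLabelling n s k r f ∧ ∀ x y, f x = f y ↔ P.part x = P.part y := by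
  obtain ⟨hcard, hsize, hdist⟩ := hP
  obtain ⟨e, he⟩ := Finset.exists_equiv_extend_of_card_eq (α := Fin k) (t := P.parts)
    (by simpa using hcard.symm) (s := ({j | (j : ℕ) < r} : Finset (Fin k)))
    (f := fun j => P.part (Fin.castLE hkn j))
    (by intro t; simp only [mem_image]; rintro ⟨j, -, rfl⟩; simp)
    (by
      intro i hi j hj hij
      have := hdist (P.part (Fin.castLE hkn i)) (by simp) (Fin.castLE hkn i) (Fin.castLE hkn j)
        (by simpa using hi) (by simpa using hj) (by simp)
        (by simp only at hij; rw [hij]; simp)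
      simpa [Fin.ext_iff] using this)
  have hf (x : Fin n) (j : Fin k) :
      e.symm ⟨P.part x, by simp⟩ = j ↔ x ∈ (e j : Finset (Fin n)) := by
    rw [Equiv.symm_apply_eq, Subtype.ext_iff, P.part_eq_iff_mem (e j).2]
  refine ⟨fun x => e.symm ⟨P.part x, by simp⟩, ⟨fun j => ?_, fun x hx => ?_⟩, fun x y => ?_⟩
  · simp only [hf]
    simpa using hsize _ (e j).2
  · have hxk : (x : ℕ) < k := hx.trans_le hrk
    have : e.symm ⟨P.part x, by simp⟩ = ⟨x, hxk⟩ := by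
      rw [Equiv.symm_apply_eq, Subtype.ext_iff, he _ (by simpa using hx)]
      rfl
    exact congrArg Fin.val this
  · simp


/-- The fibres of a labelling form an `r`-set partition. -/
theorem exists_partition_of_labelling {n s k r : ℕ} (hs : 1 ≤ s) (f : Fin n → Fin k)
    (hf : IsLabelling n s k r f) :
    ∃ P : Finpartition (univ : Finset (Fin n)), IsRSetPartition n s k r P ∧
      ∀ x y, f x = f y ↔ P.part x = P.part y := by
  have hne (j : Fin k) : ({a | f a = j} : Finset (Fin n)).Nonempty :=
    card_pos.1 (hs.trans (hf.1 j))
  let P : Finpartition (univ : Finset (Fin n)) :=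
    Finpartition.ofExistsUnique (univ.image fun j => ({a | f a = j} : Finset (Fin n)))
      (by simp)
      (fun a _ => ⟨({b | f b = f a} : Finset (Fin n)), by simp, by simp⟩)
      (by
        simp only [mem_image, mem_univ, true_and, not_exists]
        exact fun j => (hne j).ne_empty)
  have hparts : P.parts = univ.image fun j => ({a | f a = j} : Finset (Fin n)) := rfl
  have hmem (x : Fin n) : P.part x = ({a | f a = f x} : Finset (Fin n)) :=
    P.part_eq_of_mem (by simp [hparts]) (by simp)
  refine ⟨P, ⟨?_, ?_, ?_⟩, fun x y => ?_⟩
  · rw [hparts, card_image_of_injective, card_univ, Fintype.card_fin]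
    intro i j hij
    obtain ⟨x, hx⟩ := hne i
    have hx' : x ∈ ({a | f a = j} : Finset (Fin n)) := by
      rw [← show _ = ({a | f a = j} : Finset (Fin n)) from hij]; exact hx
    rw [mem_filter] at hx hx'
    exact hx.2.symm.trans hx'.2
  · simpa [hparts] using hf.1
  · simp only [hparts, mem_image, mem_univ, true_and, forall_exists_index,
      forall_apply_eq_imp_iff, mem_filter]
    intro j x y hx hy hxj hyj
    rw [Fin.ext_iff, ← hf.2 x hx, ← hf.2 y hy, hxj, hyj]
  · rw [← P.mem_part_iff_part_eq_part (mem_univ _) (mem_univ _), hmem]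
    simp

/-- A finpartition is determined by its relation of lying in the same part. -/
theorem finpartition_ext_part {n : ℕ} {P Q : Finpartition (univ : Finset (Fin n))}
    (h : ∀ x y, P.part x = P.part y ↔ Q.part x = Q.part y) : P = Q := by
  have hpart (x : Fin n) : P.part x = Q.part x := by
    ext y
    rw [P.mem_part_iff_part_eq_part (mem_univ _) (mem_univ _),
      Q.mem_part_iff_part_eq_part (mem_univ _) (mem_univ _), h]
  have key (R : Finpartition (univ : Finset (Fin n))) : R.parts = univ.image R.part := by
    ext t
    simp only [mem_image, mem_univ, true_and]
    refine ⟨fun ht => ?_, ?_⟩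
    · obtain ⟨x, hx⟩ := R.nonempty_of_mem_parts ht
      exact ⟨x, R.part_eq_of_mem ht hx⟩
    · rintro ⟨x, rfl⟩
      simp
  ext1
  rw [key, key, funext hpart]

theorem IsLabelling.surjective {n s k r : ℕ} (hs : 1 ≤ s) {f : Fin n → Fin k}
    (hf : IsLabelling n s k r f) : Function.Surjective f := fun j => by
  obtain ⟨x, hx⟩ := card_pos.1 (hs.trans (hf.1 j))
  exact ⟨x, by simpa using hx⟩

theorem IsLabelling.perm_comp {n s k r : ℕ} {f : Fin n → Fin k} (hf : IsLabelling n s k r f)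
    (σ : Equiv.Perm (Fin k)) (hσ : ∀ j : Fin k, ¬ r ≤ (j : ℕ) → σ j = j) :
    IsLabelling n s k r (σ ∘ f) := by
  refine ⟨fun j => ?_, fun x hx => ?_⟩
  · simpa [← Equiv.eq_symm_apply] using hf.1 (σ.symm j)
  · rw [Function.comp_apply, hσ _ (by rw [hf.2 x hx]; omega), hf.2 x hx]

/-- Two labellings with the same blocks differ by a permutation of the labels `≥ r`. -/
theorem exists_perm_of_ker_eq {n s k r : ℕ} (hs : 1 ≤ s) (hkn : k ≤ n)
    {f g : Fin n → Fin k} (hf : IsLabelling n s k r f) (hg : IsLabelling n s k r g)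
    (h : ∀ x y, f x = f y ↔ g x = g y) :
    ∃ σ : Equiv.Perm (Fin k), (∀ j : Fin k, ¬ r ≤ (j : ℕ) → σ j = j) ∧ σ ∘ f = g := by
  -- The permutation sends the `f`-label of a block to its `g`-label.
  have hinv := Function.rightInverse_surjInv (hf.surjective hs)
  have hcomp (x : Fin n) : g (Function.surjInv (hf.surjective hs) (f x)) = g x :=
    (h _ _).1 (hinv (f x))
  have hbij : Function.Bijective fun j => g (Function.surjInv (hf.surjective hs) j) := by
    refine Function.Surjective.bijective_of_finite fun j => ?_
    obtain ⟨x, rfl⟩ := hg.surjective hs j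
    exact ⟨f x, hcomp x⟩
  refine ⟨Equiv.ofBijective _ hbij, fun j hj => ?_, funext hcomp⟩
  have hfj : f (Fin.castLE hkn j) = j := Fin.ext (hf.2 (Fin.castLE hkn j) (by simpa using hj))
  have hgj : g (Fin.castLE hkn j) = j := Fin.ext (hg.2 (Fin.castLE hkn j) (by simpa using hj))
  have := hcomp (Fin.castLE hkn j)
  rwa [hfj, hgj] at this

/-! ### Counting labellings -/

/-- Choosing one labelling for each `r`-set partition and composing with the permutations that fix
the labels `< r` gives every labelling exactly once. -/
theorem card_labelling {n s k r : ℕ} (hs : 1 ≤ s) (hrk : r ≤ k) (hkn : k ≤ n) :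
    Nat.card {f : Fin n → Fin k // IsLabelling n s k r f} =
      Nat.card {P : Finpartition (univ : Finset (Fin n)) // IsRSetPartition n s k r P} *
        (k - r).factorial := by
  choose F hF hker using fun P : {P : Finpartition (univ : Finset (Fin n)) //
    IsRSetPartition n s k r P} => exists_labelling hrk hkn P.1 P.2
  let Φ : {P : Finpartition (univ : Finset (Fin n)) // IsRSetPartition n s k r P} ×
      {σ : Equiv.Perm (Fin k) // ∀ j : Fin k, ¬ r ≤ (j : ℕ) → σ j = j} →
      {f : Fin n → Fin k // IsLabelling n s k r f} :=
    fun p => ⟨p.2.1 ∘ F p.1, (hF p.1).perm_comp p.2.1 p.2.2⟩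
  have hΦ : Function.Bijective Φ := by
    constructor
    · rintro ⟨P, σ, hσ⟩ ⟨Q, τ, hτ⟩ h
      have h' : ∀ x, σ (F P x) = τ (F Q x) := fun x => congrFun (congrArg Subtype.val h) x
      obtain rfl : P = Q := Subtype.ext <| finpartition_ext_part fun x y => by
        rw [← hker P, ← hker Q, ← σ.injective.eq_iff, h', h', τ.injective.eq_iff]
      obtain rfl : σ = τ := Equiv.ext fun j => by
        obtain ⟨x, rfl⟩ := (hF P).surjective hs j
        exact h' x
      rfl
    · rintro ⟨g, hg⟩
      obtain ⟨P, hP, hPg⟩ := exists_partition_of_labelling hs g hg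
      obtain ⟨σ, hσ, hσg⟩ := exists_perm_of_ker_eq hs hkn (hF ⟨P, hP⟩) hg
        fun x y => (hker ⟨P, hP⟩ x y).trans (hPg x y).symm
      exact ⟨(⟨P, hP⟩, ⟨σ, hσ⟩), Subtype.ext hσg⟩
  have hcount : #{j : Fin k | r ≤ (j : ℕ)} = k - r := by
    have hlt : #{j : Fin k | (j : ℕ) < r} = r := by
      rw [Fin.card_filter_val_lt, min_eq_right hrk]
    have := card_filter_add_card_filter_not (s := (univ : Finset (Fin k)))
      (fun j : Fin k => (j : ℕ) < r)
    simp only [not_lt, hlt, card_univ, Fintype.card_fin] at this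
    omega
  rw [← Nat.card_congr (Equiv.ofBijective Φ hΦ), Nat.card_prod]
  congr 1
  rw [← Nat.card_congr (Equiv.Perm.subtypeEquivSubtypePerm fun j : Fin k => r ≤ (j : ℕ)),
    Nat.card_perm, Nat.card_eq_fintype_card, Fintype.card_subtype, hcount]

/-- A labelling is determined by its values on the last `m` elements; for a label `j < r` the
element `j` itself already contributes one element to the block, so only `s - 1` more are required. -/
theorem card_labelling_eq {m s k r : ℕ} (hs : 1 ≤ s) (hrk : r ≤ k) :
    Nat.card {f : Fin (r + m) → Fin k // IsLabelling (r + m) s k r f} =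
      #{g : Fin m → Fin k | ∀ j : Fin k, (if (j : ℕ) < r then s - 1 else s) ≤ #{a | g a = j}} := by
  have hfib (g : Fin m → Fin k) (j : Fin k) :
      #{a | Fin.append (Fin.castLE hrk) g a = j} =
        (if (j : ℕ) < r then 1 else 0) + #{a | g a = j} := by
    rw [card_filter, Fin.sum_univ_add, card_filter]
    simp only [Fin.append_left, Fin.append_right]
    congr 1
    rw [← card_filter]
    split_ifs with hj
    · rw [card_eq_one]
      refine ⟨⟨j, hj⟩, ?_⟩
      ext a
      simp [Fin.ext_iff]
    · rw [card_eq_zero, filter_eq_empty_iff]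
      rintro a - rfl
      exact hj a.2
  have hlab (g : Fin m → Fin k) : IsLabelling (r + m) s k r (Fin.append (Fin.castLE hrk) g) ↔
      ∀ j : Fin k, (if (j : ℕ) < r then s - 1 else s) ≤ #{a | g a = j} := by
    constructor
    · intro h j
      have := h.1 j
      rw [hfib] at this
      split_ifs at this ⊢ <;> omega
    · refine fun h => ⟨fun j => ?_, fun x hx => ?_⟩
      · have := h j
        rw [hfib]
        split_ifs at this ⊢ <;> omega
      · obtain ⟨a, rfl⟩ : ∃ a : Fin r, x = Fin.castAdd m a := ⟨⟨x, hx⟩, rfl⟩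
        simp
  rw [← Fintype.card_subtype, ← Nat.card_eq_fintype_card]
  refine (Nat.card_congr (Equiv.ofBijective
    (fun g => ⟨Fin.append (Fin.castLE hrk) g.1, (hlab g.1).2 g.2⟩) ⟨?_, ?_⟩)).symm
  · intro g h hgh
    refine Subtype.ext (funext fun a => ?_)
    simpa using congrFun (congrArg Subtype.val hgh) (Fin.natAdd r a)
  · rintro ⟨f, hf⟩
    have hfa : Fin.append (Fin.castLE hrk) (fun a => f (Fin.natAdd r a)) = f := by
      funext x
      refine Fin.addCases (fun a => ?_) (fun a => ?_) x
      · rw [Fin.append_left]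
        exact Fin.ext (hf.2 (Fin.castAdd m a) (by simp)).symm
      · rw [Fin.append_right]
    refine ⟨⟨fun a => f (Fin.natAdd r a), (hlab _).1 (by rwa [hfa])⟩, Subtype.ext hfa⟩

end

theorem card_r_set_partitions (n s k r : ℕ) (hs : 1 ≤ s) (hk : 1 ≤ k) (hrk : r ≤ k)
    (hn : s * k ≤ n) :
    (Nat.card {P : Finpartition (Finset.univ : Finset (Fin n)) // IsRSetPartition n s k r P} : ℚ)
      = ((n - r).factorial : ℚ) / (k - r).factorial *
          ∑ i ∈ Finset.Nat.antidiagonalTuple k (n - s * k),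
            ∏ j : Fin k,
              (1 : ℚ) / ((i j + (if (j : ℕ) < r then s - 1 else s)).factorial : ℚ) := by
  have hks : k ≤ s * k := Nat.le_mul_of_pos_left k hs
  have hkn : k ≤ n := hks.trans hn
  obtain ⟨m, rfl⟩ := Nat.exists_eq_add_of_le (hrk.trans hkn)
  -- The lower bounds on the fibre sizes add up to `s * k - r`.
  have hmin : ∑ j : Fin k, (if (j : ℕ) < r then s - 1 else s) + r = s * k := by
    have hr : ∑ j : Fin k, (if (j : ℕ) < r then 1 else 0) = r := by
      rw [← Finset.card_filter, Fin.card_filter_val_lt, min_eq_right hrk]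
    have hadd : ∑ j : Fin k, ((if (j : ℕ) < r then s - 1 else s) +
        (if (j : ℕ) < r then 1 else 0)) = s * k := by
      rw [Finset.sum_congr rfl (g := fun _ => s) fun j _ => by split_ifs <;> omega]
      simp [mul_comm]
    rwa [Finset.sum_add_distrib, hr] at hadd
  have hmain := card_min_fibers (m := m) (N := r + m - s * k)
    (fun j : Fin k => if (j : ℕ) < r then s - 1 else s) (by omega)
  have hcard := card_labelling (n := r + m) hs hrk hkn
  rw [card_labelling_eq hs hrk] at hcard
  rw [hcard] at hmain
  have hpos : ((k - r).factorial : ℚ) ≠ 0 := by positivity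
  rw [div_mul_eq_mul_div, eq_div_iff hpos, Nat.add_sub_cancel_left, ← hmain]
  push_cast
  rfl
end

section
/- Let s ≥ 1, k, r and n be integers with 1 ≤ r ≤ k and n ≥ s·k. Then S_r^(s)(n,k) = C(n−r, s−1)·S_{r−1}^(s)(n−s, k−1) + (k−r+1)·S_{r−1}^(s)(n−1, k). -/
/-!
Put `A = ∑ xⁱ / (i + s - 1)!` and `B = ∑ xⁱ / (i + s)!` in `ℚ⟦X⟧`. The sum over tuples defining
`S_r^(s)(n, k)` is the coefficient of `x ^ (n - s k)` in `A ^ r * B ^ (k - r)`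
(`tupleSum_eq_coeff`). Splitting off the constant term gives `A = 1 / (s - 1)! + x B`
(`blockSeries_eq`), and substituting this for one of the `r` factors `A` yields
`[xᵐ] A ^ r B ^ (k - r) = 1 / (s - 1)! * [xᵐ] A ^ (r - 1) B ^ (k - r)`
`+ [x ^ (m - 1)] A ^ (r - 1) B ^ (k - r + 1)` for `m = n - s k`, the last term being absent when
`m = 0`. Multiplying by `(n - r)! / (k - r)!` is the claimed recurrence. In the case `m = 0` the
last term matches the convention `S_{r-1}^(s)(n - 1, k) = 0` for `n - 1 < s k`.
-/

/-- The `s`-associated `r`-Stirling number of the second kind `S_r^(s)(n,k)`,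
as a rational number. -/
def assocRStirling2 (s r n k : ℕ) : ℚ :=
  if k = 0 then (if n = 0 ∧ r = 0 then 1 else 0)
  else if n < s * k ∨ k < r then 0
  else ((n - r).factorial : ℚ) / (k - r).factorial *
    ∑ i ∈ Finset.Nat.antidiagonalTuple k (n - s * k),
      ∏ j : Fin k,
        (1 : ℚ) / ((i j + (if (j : ℕ) < r then s - 1 else s)).factorial : ℚ)

open PowerSeries in
/-- The power series `∑ xⁱ / (i + t)!` over `ℚ`: up to the shift by `x ^ t`, the exponential
generating function of a block with at least `t` free elements. -/
noncomputable def blockSeries (t : ℕ) : ℚ⟦X⟧ :=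
  PowerSeries.mk fun i => (1 : ℚ) / ((i + t).factorial : ℚ)

theorem sum_antidiagonalTuple_prod_eq_coeff (k : ℕ) (f : Fin k → ℕ → ℚ) (m : ℕ) :
    ∑ i ∈ Finset.Nat.antidiagonalTuple k m, ∏ j, f j (i j)
      = PowerSeries.coeff m (∏ j, PowerSeries.mk (f j)) := by
  induction k generalizing m with
  | zero =>
    cases m with
    | zero => simp
    | succ m => simp [PowerSeries.coeff_one]
  | succ k ih =>
    rw [Fin.prod_univ_succ, PowerSeries.coeff_mul]
    -- Split a tuple into its first entry and the remaining tuple.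
    have hU : Finset.Nat.antidiagonalTuple (k + 1) m
        = (Finset.HasAntidiagonal.antidiagonal m).biUnion fun p =>
          (Finset.Nat.antidiagonalTuple k p.2).image (Fin.cons p.1) := by
      ext i
      simp only [Finset.mem_biUnion, Finset.mem_image, Finset.Nat.mem_antidiagonalTuple,
        Finset.HasAntidiagonal.mem_antidiagonal]
      constructor
      · intro h
        rw [Fin.sum_univ_succ] at h
        exact ⟨(i 0, ∑ j : Fin k, i j.succ), h, Fin.tail i, rfl, Fin.cons_self_tail i⟩
      · rintro ⟨p, hp, t, ht, rfl⟩
        rw [Fin.sum_univ_succ]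
        simp [ht, hp]
    rw [hU, Finset.sum_biUnion]
    · refine Finset.sum_congr rfl fun p _ => ?_
      rw [Finset.sum_image (fun a _ b _ h => Fin.cons_right_injective _ h), ← ih,
        PowerSeries.coeff_mk, Finset.mul_sum]
      refine Finset.sum_congr rfl fun t _ => ?_
      rw [Fin.prod_univ_succ]
      simp
    · intro p hp q hq hpq
      rw [Function.onFun, Finset.disjoint_left]
      intro i hi hi'
      obtain ⟨t, -, rfl⟩ := Finset.mem_image.1 hi
      obtain ⟨u, -, hu⟩ := Finset.mem_image.1 hi'
      have h0 : q.1 = p.1 := by simpa using congrFun hu 0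
      simp only [Finset.mem_coe, Finset.HasAntidiagonal.mem_antidiagonal] at hp hq
      exact hpq (Prod.ext h0.symm (by omega))

/-- The sum over tuples in the definition of `assocRStirling2`, as a coefficient. -/
theorem tupleSum_eq_coeff (s r k m : ℕ) (hrk : r ≤ k) :
    ∑ i ∈ Finset.Nat.antidiagonalTuple k m, ∏ j : Fin k,
        (1 : ℚ) / ((i j + (if (j : ℕ) < r then s - 1 else s)).factorial : ℚ)
      = PowerSeries.coeff m (blockSeries (s - 1) ^ r * blockSeries s ^ (k - r)) := by
  rw [sum_antidiagonalTuple_prod_eq_coeff k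
    (fun j a => (1 : ℚ) / ((a + (if (j : ℕ) < r then s - 1 else s)).factorial : ℚ)) m]
  change PowerSeries.coeff m
    (∏ j : Fin k, blockSeries (if (j : ℕ) < r then s - 1 else s)) = _
  rw [Fin.prod_univ_eq_prod_range (fun j => blockSeries (if j < r then s - 1 else s)) k,
    ← Finset.prod_range_mul_prod_Ico _ hrk]
  congr 2
  · rw [Finset.prod_congr rfl (g := fun _ => blockSeries (s - 1))
      (fun j hj => by rw [if_pos (Finset.mem_range.1 hj)])]
    simp
  · rw [Finset.prod_congr rfl (g := fun _ => blockSeries s)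
      (fun j hj => by rw [if_neg (not_lt.2 (Finset.mem_Ico.1 hj).1)])]
    simp

theorem blockSeries_eq (t : ℕ) :
    blockSeries t
      = PowerSeries.C ((1 : ℚ) / (t.factorial : ℚ)) + PowerSeries.X * blockSeries (t + 1) := by
  ext m
  cases m with
  | zero => simp [blockSeries]
  | succ m =>
    rw [map_add, PowerSeries.coeff_succ_X_mul, PowerSeries.coeff_C]
    simp [blockSeries, add_assoc, add_comm 1 t]

/-- For `k = 0` the closed formula agrees with the separate convention in the definition, since
the empty product of series is `1`; hence no case distinction on `k` is needed here. -/
theorem assocRStirling2_eq_coeff (s r n k : ℕ) (hrk : r ≤ k) (hn : s * k ≤ n) :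
    assocRStirling2 s r n k = ((n - r).factorial : ℚ) / (k - r).factorial *
      PowerSeries.coeff (n - s * k) (blockSeries (s - 1) ^ r * blockSeries s ^ (k - r)) := by
  unfold assocRStirling2
  split_ifs with hk h0 h
  · obtain ⟨rfl, rfl⟩ := h0
    simp [hk]
  · obtain rfl : r = 0 := by omega
    have hn0 : n ≠ 0 := fun h => h0 ⟨h, rfl⟩
    simp [hk, PowerSeries.coeff_one, hn0]
  · omega
  · rw [tupleSum_eq_coeff s r k _ hrk]

theorem assocRStirling2_cross_rec (s r n k : ℕ) (hs : 1 ≤ s) (hr : 1 ≤ r)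
    (hrk : r ≤ k) (hn : s * k ≤ n) :
    assocRStirling2 s r n k
      = (Nat.choose (n - r) (s - 1) : ℚ) * assocRStirling2 s (r - 1) (n - s) (k - 1)
        + ((k - r + 1 : ℕ) : ℚ) * assocRStirling2 s (r - 1) (n - 1) k := by
  obtain ⟨t, rfl⟩ : ∃ t, s = t + 1 := ⟨s - 1, by omega⟩
  obtain ⟨q, rfl⟩ : ∃ q, r = q + 1 := ⟨r - 1, by omega⟩
  obtain ⟨d, rfl⟩ : ∃ d, k = q + 1 + d := ⟨k - (q + 1), by omega⟩
  obtain ⟨m, rfl⟩ : ∃ m, n = (t + 1) * (q + 1 + d) + m := ⟨_, (Nat.add_sub_of_le hn).symm⟩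
  -- `N = n - r - (s - 1)`, which is nonnegative because `s k ≥ s + k - 1`.
  obtain ⟨N, hN⟩ : ∃ N, (t + 1) * (q + 1 + d) + m = N + t + (q + 1) :=
    ⟨t * (q + d) + d + m, by ring⟩
  have e1 : (t + 1) * (q + 1 + d) = (t + 1) * (q + d) + (t + 1) := by ring
  rw [assocRStirling2_eq_coeff _ _ _ _ hrk hn,
    assocRStirling2_eq_coeff (t + 1) (q + 1 - 1) _ (q + 1 + d - 1) (by omega)
      (by rw [show q + 1 + d - 1 = q + d by omega]; omega)]
  have a1 : (t + 1) * (q + 1 + d) + m - (q + 1) = N + t := by omega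
  have a2 : (t + 1) * (q + 1 + d) + m - (t + 1) - (q + 1 - 1) = N := by omega
  have a3 : q + 1 + d - 1 = q + d := by omega
  have a4 : (t + 1) * (q + 1 + d) + m - (t + 1) - (t + 1) * (q + d) = m := by omega
  have a5 : q + 1 + d - (q + 1) = d := by omega
  have a6 : q + d - q = d := by omega
  have a7 : (t + 1) * (q + 1 + d) + m - 1 - q = N + t := by omega
  have a8 : q + 1 + d - q = d + 1 := by omega
  have hch : ((N + t).choose t : ℚ) * N.factorial
      = (N + t).factorial * (1 / (t.factorial : ℚ)) := by
    have h := Nat.add_choose_mul_factorial_mul_factorial N t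
    have ht : (t.factorial : ℚ) ≠ 0 := by positivity
    field_simp
    exact_mod_cast h
  have hd : (d.factorial : ℚ) ≠ 0 := by positivity
  rw [a2, a3, a4, a1, a5, Nat.add_sub_cancel_left]
  simp only [Nat.add_sub_cancel]
  rw [a6]
  have hsplit : blockSeries t ^ (q + 1) * blockSeries (t + 1) ^ d
      = PowerSeries.C ((1 : ℚ) / (t.factorial : ℚ))
          * (blockSeries t ^ q * blockSeries (t + 1) ^ d)
        + PowerSeries.X * (blockSeries t ^ q * blockSeries (t + 1) ^ (d + 1)) := by
    rw [pow_succ (blockSeries t) q]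
    nth_rewrite 2 [blockSeries_eq t]
    ring
  rw [hsplit, map_add, PowerSeries.coeff_C_mul]
  have hfirst (c : ℚ) : ((N + t).choose t : ℚ) * ((N.factorial : ℚ) / d.factorial * c)
      = (N + t).factorial / d.factorial * (1 / (t.factorial : ℚ) * c) := by
    linear_combination (c / d.factorial) * hch
  rw [hfirst, mul_add]
  congr 1
  cases m with
  | zero =>
    have hlt : (t + 1) * (q + 1 + d) + 0 - 1 < (t + 1) * (q + 1 + d) := by omega
    rw [assocRStirling2, if_neg (by omega), if_pos (Or.inl hlt)]
    simp
  | succ m =>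
    rw [assocRStirling2_eq_coeff _ _ _ _ (by omega) (by omega), a7, a8,
      PowerSeries.coeff_succ_X_mul,
      show (t + 1) * (q + 1 + d) + (m + 1) - 1 - (t + 1) * (q + 1 + d) = m by omega,
      Nat.factorial_succ]
    simp only [Nat.add_sub_cancel]
    push_cast
    field_simp
end
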